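/- Let f : ℝ² → ℝ² be a C^∞ map with f(0)=0 which has corank one at 0, let λ be its Jacobian determinant, and let η be any null vector field for f. Then j⁴f(0) is A⁴-equivalent to the 4-jet at 0 of (x,y) ↦ (x, x²y + xy³) or to the 4-jet at 0 of (x,y) ↦ (x, x²y) if and only if dλ(0) = 0, the Hessian matrix H_λ(0) has rank 1, and (η²λ)(0) = (η³λ)(0) = 0. -/

import Mathlib

open Filter Topology

noncomputable section

/-- Directional derivative of a scalar function. -/
def dop (v : ℝ × ℝ) (g : ℝ × ℝ → ℝ) : ℝ × ℝ → ℝ :=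
  fun p => fderiv ℝ g p v

/-- Partial derivative operator in the first coordinate. -/
def pdx : (ℝ × ℝ → ℝ) → ℝ × ℝ → ℝ := dop (1, 0)

/-- Partial derivative operator in the second coordinate. -/
def pdy : (ℝ × ℝ → ℝ) → ℝ × ℝ → ℝ := dop (0, 1)

/-- Taylor coefficient `a_{ij} = ∂_x^i ∂_y^j g(0,0) / (i! j!)` of `g` at the origin. -/
def tcoeff (g : ℝ × ℝ → ℝ) (i j : ℕ) : ℝ :=
  (pdx^[i] (pdy^[j] g)) 0 / (Nat.factorial i * Nat.factorial j)

/-- The Jacobian determinant `λ_f` of a map `f : ℝ² → ℝ²`. -/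
def jacDet (f : ℝ × ℝ → ℝ × ℝ) (p : ℝ × ℝ) : ℝ :=
  (fderiv ℝ f p (1, 0)).1 * (fderiv ℝ f p (0, 1)).2 -
    (fderiv ℝ f p (1, 0)).2 * (fderiv ℝ f p (0, 1)).1

/-- `f` has corank one at `0` : the derivative of `f` at `0` has rank one. -/
def CorankOne (f : ℝ × ℝ → ℝ × ℝ) : Prop :=
  LinearMap.rank ((fderiv ℝ f 0).toLinearMap) = 1

/-- `η` is a null vector field for `f` near `0`. -/
def IsNullVF (f η : ℝ × ℝ → ℝ × ℝ) : Prop :=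
  η 0 ≠ 0 ∧ ∃ U ∈ 𝓝 (0 : ℝ × ℝ),
    ContDiffOn ℝ (⊤ : ℕ∞) η U ∧ ∀ p ∈ U, jacDet f p = 0 → fderiv ℝ f p (η p) = 0

/-- The derivative `(ηg)(p) = Dg(p)(η(p))` of `g` along the vector field `η`. -/
def etaD (η : ℝ × ℝ → ℝ × ℝ) (g : ℝ × ℝ → ℝ) : ℝ × ℝ → ℝ :=
  fun p => fderiv ℝ g p (η p)

/-- The iterated derivative `η^k g` along the vector field `η`. -/
def etaIter (η : ℝ × ℝ → ℝ × ℝ) : ℕ → (ℝ × ℝ → ℝ) → ℝ × ℝ → ℝ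
  | 0, g => g
  | k + 1, g => etaD η (etaIter η k g)

/-- The Hessian matrix of second partial derivatives of `g` at `0`. -/
def hess (g : ℝ × ℝ → ℝ) : Matrix (Fin 2) (Fin 2) ℝ :=
  !![pdx (pdx g) 0, pdx (pdy g) 0; pdy (pdx g) 0, pdy (pdy g) 0]

/-- `A^r`-equivalence of the `r`-jets at `0` of two map-germs `(ℝ²,0) → (ℝ²,0)`. -/
def JetEquiv (r : ℕ) (f g : ℝ × ℝ → ℝ × ℝ) : Prop :=
  ∃ φ ψ : ℝ × ℝ → ℝ × ℝ,
    ContDiff ℝ (⊤ : ℕ∞) φ ∧ ContDiff ℝ (⊤ : ℕ∞) ψ ∧ φ 0 = 0 ∧ ψ 0 = 0 ∧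
    Function.Bijective (⇑(fderiv ℝ φ 0)) ∧ Function.Bijective (⇑(fderiv ℝ ψ 0)) ∧
    ∀ i ≤ r, iteratedFDeriv ℝ i (ψ ∘ f ∘ φ) 0 = iteratedFDeriv ℝ i g 0

/-- `A`-equivalence of two map-germs `(ℝ²,0) → (ℝ²,0)`. -/
def AEquiv (f g : ℝ × ℝ → ℝ × ℝ) : Prop :=
  ∃ φ ψ : ℝ × ℝ → ℝ × ℝ,
    ContDiff ℝ (⊤ : ℕ∞) φ ∧ ContDiff ℝ (⊤ : ℕ∞) ψ ∧ φ 0 = 0 ∧ ψ 0 = 0 ∧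
    Function.Bijective (⇑(fderiv ℝ φ 0)) ∧ Function.Bijective (⇑(fderiv ℝ ψ 0)) ∧
    ∀ᶠ p in 𝓝 (0 : ℝ × ℝ), ψ (f (φ p)) = g p

/-- `f` has the form `(x, g(x,y))` where `g` is `C^∞` and the Taylor coefficients of `g`
of total degree `< N` at the origin are prescribed by `P`. -/
def HasForm (f : ℝ × ℝ → ℝ × ℝ) (g : ℝ × ℝ → ℝ) (N : ℕ) (P : ℕ → ℕ → ℝ) : Prop :=
  ContDiff ℝ (⊤ : ℕ∞) g ∧ (∀ p, f p = (p.1, g p)) ∧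
    ∀ i j, i + j < N → tcoeff g i j = P i j

/-!
Write `λ = jacDet f`. Replacing `f` by `ψ ∘ f ∘ φ` changes `λ` to a unit times `λ ∘ φ`, and changing
`f` by terms of order `5` changes `λ` by terms of order `4`. Hence the condition that `λ` be, modulo
terms of order `4`, a product `a * b` of two regular functions whose zero sets are tangent to the
kernel of `Df(0)` depends only on the `A⁴`-class of `j⁴f(0)`.

It is equivalent to the condition on `dλ(0)`, `H_λ(0)` and `η^k λ(0)`: let `x` be a linear form that
vanishes on `η(0)`. As `η²λ(0) = 0`, `λ` is of the form `x q` modulo terms of order `3`, and its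
Hessian has rank `1` exactly if `q` is regular with zero set tangent to `η(0)`. Then
`η³(x q)(0) = 0`, so `η³λ(0) = 0` makes the remainder divisible by `x` modulo terms of order `4`.

For the normal form, reduce `f` to `(x, h)`, so that `λ = ∂_y h` and `∂_y` spans the kernel of
`Df(0)`. Then `λ = x (c x + q)` modulo terms of order `4`, with `c ≠ 0` and a quadratic form `q`.
Integrating, `h = c x² y + A x³ y + B x² y² + C x y³` up to a function of `x` and terms of order
`5`. Substituting `y - (A x y + B y²) / c` for `y` removes the terms in `A` and `B`, and scaling
normalises `c` to `1` and `C` to `0` or `1`.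
-/

open scoped ContDiff

section Vanishing

universe u

variable {E F G H : Type u} [NormedAddCommGroup E] [NormedSpace ℝ E]
  [NormedAddCommGroup F] [NormedSpace ℝ F] [NormedAddCommGroup G] [NormedSpace ℝ G]
  [NormedAddCommGroup H] [NormedSpace ℝ H] {m n : ℕ}

/-- `VanishesToOrder n f` says that `f` is smooth at the origin and that its derivatives of order
`< n` vanish there, i.e. that its germ belongs to `𝔪ⁿ`. Congruences modulo `𝔪ⁿ` are expressed as
`VanishesToOrder n (f - g)`. -/
structure VanishesToOrder (n : ℕ) (f : E → F) : Prop where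
  contDiffAt : ContDiffAt ℝ ∞ f 0
  iteratedFDeriv_eq_zero : ∀ i < n, iteratedFDeriv ℝ i f 0 = 0

theorem vanishesToOrder_zero_iff {f : E → F} : VanishesToOrder 0 f ↔ ContDiffAt ℝ ∞ f 0 :=
  ⟨fun h => h.contDiffAt, fun h => ⟨h, fun _ hi => absurd hi (Nat.not_lt_zero _)⟩⟩

theorem vanishesToOrder_succ_iff {f : E → F} :
    VanishesToOrder (n + 1) f ↔
      ContDiffAt ℝ ∞ f 0 ∧ f 0 = 0 ∧ VanishesToOrder n (fderiv ℝ f) := by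
  have key (i : ℕ) : iteratedFDeriv ℝ (i + 1) f 0 = 0 ↔ iteratedFDeriv ℝ i (fderiv ℝ f) 0 = 0 := by
    rw [← norm_eq_zero, ← norm_iteratedFDeriv_fderiv, norm_eq_zero]
  have key₀ : iteratedFDeriv ℝ 0 f 0 = 0 ↔ f 0 = 0 := by
    rw [← norm_eq_zero, norm_iteratedFDeriv_zero, norm_eq_zero]
  constructor
  · intro h
    exact ⟨h.contDiffAt, key₀.1 (h.2 0 n.succ_pos), h.contDiffAt.fderiv_right (by simp),
      fun i hi => (key i).1 (h.2 (i + 1) (Nat.succ_lt_succ hi))⟩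
  · rintro ⟨hf, hf₀, hf'⟩
    refine ⟨hf, fun i hi => ?_⟩
    cases i with
    | zero => exact key₀.2 hf₀
    | succ i => exact (key i).2 (hf'.2 i (Nat.lt_of_succ_lt_succ hi))

theorem vanishesToOrder_one_iff {f : E → F} :
    VanishesToOrder 1 f ↔ ContDiffAt ℝ ∞ f 0 ∧ f 0 = 0 := by
  rw [vanishesToOrder_succ_iff, vanishesToOrder_zero_iff]
  exact ⟨fun h => ⟨h.1, h.2.1⟩, fun h => ⟨h.1, h.2, h.1.fderiv_right (by simp)⟩⟩

theorem vanishesToOrder_one_clm (L : E →L[ℝ] F) : VanishesToOrder 1 L :=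
  vanishesToOrder_one_iff.2 ⟨L.contDiff.contDiffAt, L.map_zero⟩

theorem contDiffAt_bilinear (B : F →L[ℝ] G →L[ℝ] H) {f : E → F} {g : E → G} {p : E}
    (hf : ContDiffAt ℝ ∞ f p) (hg : ContDiffAt ℝ ∞ g p) :
    ContDiffAt ℝ ∞ (fun q => B (f q) (g q)) p :=
  (B.contDiff.contDiffAt.comp p hf).clm_apply hg

namespace VanishesToOrder

variable {f g : E → F}

theorem eventually_differentiableAt (hf : VanishesToOrder n f) :
    ∀ᶠ p in 𝓝 0, DifferentiableAt ℝ f p :=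
  ((contDiffAt_infty.1 hf.1 1).eventually (by simp)).mono
    fun _ h => h.differentiableAt one_ne_zero

protected theorem zero : VanishesToOrder n (0 : E → F) :=
  ⟨contDiffAt_const, fun i _ => by simp⟩

protected theorem mono (hf : VanishesToOrder n f) (h : m ≤ n) : VanishesToOrder m f :=
  ⟨hf.1, fun i hi => hf.2 i (hi.trans_le h)⟩

theorem apply_zero (hf : VanishesToOrder n f) (hn : 0 < n) : f 0 = 0 :=
  (vanishesToOrder_one_iff.1 (hf.mono hn)).2

protected theorem fderiv (hf : VanishesToOrder n f) : VanishesToOrder (n - 1) (fderiv ℝ f) := by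
  cases n with
  | zero => exact vanishesToOrder_zero_iff.2 (hf.1.fderiv_right (by simp))
  | succ n => exact (vanishesToOrder_succ_iff.1 hf).2.2

theorem fderiv_apply_zero (hf : VanishesToOrder n f) (hn : 2 ≤ n) : fderiv ℝ f 0 = 0 :=
  (hf.mono hn).fderiv.apply_zero one_pos

protected theorem congr (hf : VanishesToOrder n f) (h : g =ᶠ[𝓝 0] f) : VanishesToOrder n g :=
  ⟨hf.1.congr_of_eventuallyEq h, fun i hi => (h.iteratedFDeriv ℝ i).self_of_nhds.trans (hf.2 i hi)⟩

theorem clm_comp (L : F →L[ℝ] G) (hf : VanishesToOrder n f) :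
    VanishesToOrder n (fun p => L (f p)) := by
  refine ⟨L.contDiff.contDiffAt.comp 0 hf.1, fun i hi => ?_⟩
  have comp_left := L.iteratedFDeriv_comp_left hf.1 (i := i) (mod_cast le_top)
  rw [hf.2 i hi] at comp_left
  exact comp_left.trans (by ext; simp)

protected theorem add (hf : VanishesToOrder n f) (hg : VanishesToOrder n g) :
    VanishesToOrder n (f + g) := by
  refine ⟨hf.1.add hg.1, fun i hi => ?_⟩
  rw [iteratedFDeriv_add_apply (hf.1.of_le (mod_cast le_top)) (hg.1.of_le (mod_cast le_top)),
    hf.2 i hi, hg.2 i hi, add_zero]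

theorem const_smul (c : ℝ) (hf : VanishesToOrder n f) : VanishesToOrder n (c • f) :=
  hf.clm_comp (c • ContinuousLinearMap.id ℝ F)

protected theorem neg (hf : VanishesToOrder n f) : VanishesToOrder n (-f) :=
  hf.clm_comp (-ContinuousLinearMap.id ℝ F)

protected theorem sub (hf : VanishesToOrder n f) (hg : VanishesToOrder n g) :
    VanishesToOrder n (f - g) := by
  rw [sub_eq_add_neg]
  exact hf.add hg.neg

theorem bilinear (B : F →L[ℝ] G →L[ℝ] H) {g : E → G} (hf : VanishesToOrder m f)
    (hg : VanishesToOrder n g) : VanishesToOrder (m + n) (fun p => B (f p) (g p)) := by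
  suffices ∀ k ≤ m + n, VanishesToOrder k (fun p => B (f p) (g p)) from this _ le_rfl
  intro k
  induction k generalizing m n F G H with
  | zero => exact fun _ => vanishesToOrder_zero_iff.2 (contDiffAt_bilinear B hf.1 hg.1)
  | succ k ih =>
    intro hk
    refine vanishesToOrder_succ_iff.2 ⟨contDiffAt_bilinear B hf.1 hg.1, ?_, ?_⟩
    · rcases Nat.eq_zero_or_pos m with rfl | hm
      · rw [hg.apply_zero (by omega), map_zero]
      · rw [hf.apply_zero hm, map_zero, zero_apply]
    · have leibniz : fderiv ℝ (fun p => B (f p) (g p)) =ᶠ[𝓝 0]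
          (fun p => B.precompR E (f p) (fderiv ℝ g p)) +
            fun p => B.precompL E (fderiv ℝ f p) (g p) := by
        filter_upwards [hf.eventually_differentiableAt, hg.eventually_differentiableAt]
          with p hfp hgp using B.fderiv_of_bilinear hfp hgp
      have left := ih (B.precompR E) hf hg.fderiv (by omega)
      have right := ih (B.precompL E) hf.fderiv hg (by omega)
      exact (left.add right).congr leibniz

protected theorem mul {E : Type} [NormedAddCommGroup E] [NormedSpace ℝ E] {a b : E → ℝ}
    (ha : VanishesToOrder m a) (hb : VanishesToOrder n b) : VanishesToOrder (m + n) (a * b) :=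
  ha.bilinear (ContinuousLinearMap.mul ℝ ℝ) hb

protected theorem pow {E : Type} [NormedAddCommGroup E] [NormedSpace ℝ E] {a : E → ℝ}
    (ha : VanishesToOrder 1 a) (k : ℕ) : VanishesToOrder k (a ^ k) := by
  induction k with
  | zero => exact pow_zero a ▸ vanishesToOrder_zero_iff.2 contDiffAt_const
  | succ k ih => exact pow_succ a k ▸ ih.mul ha

theorem tendsto_zero (hf : VanishesToOrder n f) (hn : 0 < n) : Tendsto f (𝓝 0) (𝓝 0) := by
  simpa only [hf.apply_zero hn] using hf.1.continuousAt.tendsto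

theorem eventually_fderiv_comp {φ : E → F} {f : F → G} (hf : VanishesToOrder n f)
    (hφ : VanishesToOrder 1 φ) : fderiv ℝ (f ∘ φ) =ᶠ[𝓝 0]
      fun p => (fderiv ℝ f (φ p)).comp (fderiv ℝ φ p) := by
  filter_upwards [hφ.eventually_differentiableAt,
    (hφ.tendsto_zero one_pos).eventually hf.eventually_differentiableAt] with p hφp hfp
  exact fderiv_comp p hfp hφp

theorem fderiv_comp_zero {φ : E → F} {f : F → G} (hf : VanishesToOrder n f)
    (hφ : VanishesToOrder 1 φ) :
    fderiv ℝ (f ∘ φ) 0 = (fderiv ℝ f 0).comp (fderiv ℝ φ 0) :=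
  (hf.eventually_fderiv_comp hφ).self_of_nhds.trans (by simp only [hφ.apply_zero one_pos])

protected theorem comp {φ : E → F} {f : F → G} (hf : VanishesToOrder n f)
    (hφ : VanishesToOrder 1 φ) : VanishesToOrder n (f ∘ φ) := by
  have hφ₀ := hφ.apply_zero one_pos
  have smooth : ContDiffAt ℝ ∞ (f ∘ φ) 0 := ContDiffAt.comp 0 (hφ₀.symm ▸ hf.1) hφ.1
  induction n generalizing G with
  | zero => exact vanishesToOrder_zero_iff.2 smooth
  | succ n ih =>
    refine vanishesToOrder_succ_iff.2 ⟨smooth, ?_, ?_⟩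
    · rw [Function.comp_apply, hφ₀, hf.apply_zero n.succ_pos]
    · have hf' := ih hf.fderiv (ContDiffAt.comp 0 (hφ₀.symm ▸ hf.fderiv.1) hφ.1)
      exact (hf'.bilinear (ContinuousLinearMap.compL ℝ E F G) hφ.fderiv).congr
        (hf.eventually_fderiv_comp hφ)

theorem comp_sub_comp {φ χ : E → F} {f : F → G} (hf : VanishesToOrder m f)
    (hφ : VanishesToOrder 1 φ) (hχ : VanishesToOrder 1 χ) (h : VanishesToOrder n (φ - χ)) :
    VanishesToOrder (m - 1 + n) (f ∘ φ - f ∘ χ) := by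
  suffices ∀ k ≤ m - 1 + n, VanishesToOrder k (f ∘ φ - f ∘ χ) from this _ le_rfl
  intro k
  induction k generalizing m n G with
  | zero =>
    exact fun _ => vanishesToOrder_zero_iff.2 ((hf.comp hφ).sub (hf.comp hχ)).1
  | succ k ih =>
    intro hk
    refine vanishesToOrder_succ_iff.2 ⟨((hf.comp hφ).sub (hf.comp hχ)).1, ?_, ?_⟩
    · simp [hφ.apply_zero one_pos, hχ.apply_zero one_pos]
    let B := ContinuousLinearMap.compL ℝ E F G
    have split : fderiv ℝ (f ∘ φ - f ∘ χ) =ᶠ[𝓝 0]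
        (fun p => B ((fderiv ℝ f ∘ φ) p) (fderiv ℝ (φ - χ) p)) +
          fun p => B ((fderiv ℝ f ∘ φ - fderiv ℝ f ∘ χ) p) (fderiv ℝ χ p) := by
      filter_upwards [hf.eventually_fderiv_comp hφ, hf.eventually_fderiv_comp hχ,
        hφ.eventually_differentiableAt, hχ.eventually_differentiableAt,
        (hf.comp hφ).eventually_differentiableAt, (hf.comp hχ).eventually_differentiableAt]
        with p hfφ hfχ hφp hχp hfφp hfχp
      rw [fderiv_sub hfφp hfχp, hfφ, hfχ, Pi.add_apply, fderiv_sub hφp hχp]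
      ext u
      simp [B]
    have left := (hf.fderiv.comp hφ).bilinear B h.fderiv
    have right := (ih hf.fderiv h (by omega)).bilinear B hχ.fderiv
    exact ((left.mono (by omega)).add (right.mono (by omega))).congr split

theorem comp_sub_comp_of_contDiffAt {φ χ : E → F} {f : F → G} (hf : ContDiffAt ℝ ∞ f 0)
    (hφ : VanishesToOrder 1 φ) (hχ : VanishesToOrder 1 χ) (h : VanishesToOrder n (φ - χ)) :
    VanishesToOrder n (f ∘ φ - f ∘ χ) := by
  simpa only [zero_tsub, zero_add] using
    (vanishesToOrder_zero_iff.2 hf).comp_sub_comp hφ hχ h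

theorem fderiv_apply_self_sub_smul (hf : VanishesToOrder n f) :
    VanishesToOrder (n + 1) ((fun p => fderiv ℝ f p p) - (n : ℝ) • f) := by
  have id_clm : VanishesToOrder 1 (fun p : E => p) :=
    vanishesToOrder_one_clm (ContinuousLinearMap.id ℝ E)
  induction n generalizing F with
  | zero => simpa using! hf.fderiv.bilinear (ContinuousLinearMap.id ℝ (E →L[ℝ] F)) id_clm
  | succ n ih =>
    have hf' := hf.fderiv
    have smooth : ContDiffAt ℝ ∞ ((fun p => fderiv ℝ f p p) - ((n + 1 : ℕ) : ℝ) • f) 0 :=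
      (hf'.1.clm_apply contDiffAt_id).sub (contDiffAt_const.smul hf.1)
    refine vanishesToOrder_succ_iff.2 ⟨smooth, ?_, (ih hf').congr ?_⟩
    · simp [hf.apply_zero n.succ_pos]
    have hsymm : ∀ᶠ p in 𝓝 0, IsSymmSndFDerivAt ℝ f p :=
      ((contDiffAt_infty.1 hf.1 2).eventually (by simp)).mono
        fun p hp => hp.isSymmSndFDerivAt (by simp)
    filter_upwards [hsymm, hf.eventually_differentiableAt, hf'.eventually_differentiableAt]
      with p hsymm hfp hfp'
    ext u
    have key : HasFDerivAt ((fun p => fderiv ℝ f p p) - ((n + 1 : ℕ) : ℝ) • f) _ p :=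
      (hfp'.hasFDerivAt.clm_apply (hasFDerivAt_id p)).sub
        (hfp.hasFDerivAt.const_smul ((n + 1 : ℕ) : ℝ))
    rw [key.fderiv]
    simp only [ContinuousLinearMap.comp_id, id_eq, Nat.cast_add, Nat.cast_one, sub_apply, add_apply,
      ContinuousLinearMap.flip_apply, smul_apply, Pi.sub_apply, Pi.smul_apply, hsymm.eq p u]
    module

end VanishesToOrder

theorem iteratedFDeriv_eq_iff_vanishesToOrder_sub {f g : E → F} (hf : ContDiffAt ℝ ∞ f 0)
    (hg : ContDiffAt ℝ ∞ g 0) :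
    (∀ i ≤ n, iteratedFDeriv ℝ i f 0 = iteratedFDeriv ℝ i g 0) ↔
      VanishesToOrder (n + 1) (f - g) := by
  have iteratedFDeriv_sub (i : ℕ) : iteratedFDeriv ℝ i (f - g) 0 =
      iteratedFDeriv ℝ i f 0 - iteratedFDeriv ℝ i g 0 :=
    iteratedFDeriv_sub_apply (hf.of_le (mod_cast le_top)) (hg.of_le (mod_cast le_top))
  refine ⟨fun h => ⟨hf.sub hg, fun i hi => ?_⟩, fun h i hi => ?_⟩
  · rw [iteratedFDeriv_sub, h i (Nat.le_of_lt_succ hi), sub_self]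
  · rw [← sub_eq_zero, ← iteratedFDeriv_sub, h.2 i (Nat.lt_succ_of_le hi)]

end Vanishing

section VectorField

variable {η : ℝ × ℝ → ℝ × ℝ} {g h a b : ℝ × ℝ → ℝ} {k m n : ℕ}

theorem etaIter_succ' (η : ℝ × ℝ → ℝ × ℝ) (k : ℕ) (g : ℝ × ℝ → ℝ) :
    etaIter η (k + 1) g = etaIter η k (etaD η g) := by
  induction k with
  | zero => rfl
  | succ k ih => exact congrArg (etaD η) ih

theorem etaD_congr (h : g =ᶠ[𝓝 0] a) : etaD η g =ᶠ[𝓝 0] etaD η a :=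
  h.fderiv.mono fun p hp => congrArg (fun L : ℝ × ℝ →L[ℝ] ℝ => L (η p)) hp

theorem etaIter_congr (h : g =ᶠ[𝓝 0] a) : etaIter η k g =ᶠ[𝓝 0] etaIter η k a := by
  induction k with
  | zero => exact h
  | succ k ih => exact etaD_congr ih

protected theorem VanishesToOrder.etaD (hη : ContDiffAt ℝ ∞ η 0) (hg : VanishesToOrder n g) :
    VanishesToOrder (n - 1) (etaD η g) :=
  hg.fderiv.bilinear (ContinuousLinearMap.id ℝ (ℝ × ℝ →L[ℝ] ℝ)) (vanishesToOrder_zero_iff.2 hη)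

protected theorem VanishesToOrder.etaIter (hη : ContDiffAt ℝ ∞ η 0) (hg : VanishesToOrder n g) :
    VanishesToOrder (n - k) (etaIter η k g) := by
  induction k with
  | zero => exact hg
  | succ k ih => exact ih.etaD hη

theorem etaD_add (ha : VanishesToOrder m a) (hb : VanishesToOrder n b) :
    etaD η (a + b) =ᶠ[𝓝 0] etaD η a + etaD η b := by
  filter_upwards [ha.eventually_differentiableAt, hb.eventually_differentiableAt] with p hap hbp
  simp only [etaD, fderiv_add hap hbp, add_apply, Pi.add_apply]

theorem etaD_mul (ha : VanishesToOrder m a) (hb : VanishesToOrder n b) :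
    etaD η (a * b) =ᶠ[𝓝 0] etaD η a * b + a * etaD η b := by
  filter_upwards [ha.eventually_differentiableAt, hb.eventually_differentiableAt] with p hap hbp
  simp only [etaD, fderiv_mul hap hbp, add_apply, smul_apply, Pi.add_apply, Pi.mul_apply,
    smul_eq_mul]
  ring

theorem etaIter_add (hη : ContDiffAt ℝ ∞ η 0) (ha : VanishesToOrder m a)
    (hb : VanishesToOrder n b) :
    etaIter η k (a + b) =ᶠ[𝓝 0] etaIter η k a + etaIter η k b := by
  induction k with
  | zero => rfl
  | succ k ih => exact (etaD_congr ih).trans (etaD_add (ha.etaIter hη) (hb.etaIter hη))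

theorem etaIter_apply_zero_congr (hη : ContDiffAt ℝ ∞ η 0) (ha : VanishesToOrder n a)
    (h : VanishesToOrder (k + 1) (g - a)) : etaIter η k g 0 = etaIter η k a 0 := by
  have split := (etaIter_add (k := k) hη ha h).self_of_nhds
  rw [add_sub_cancel] at split
  rw [split, Pi.add_apply, (h.etaIter hη).apply_zero (by omega), add_zero]

theorem etaIter_mul_apply_zero (hη : ContDiffAt ℝ ∞ η 0) (ha : ContDiffAt ℝ ∞ a 0)
    (hb : ContDiffAt ℝ ∞ b 0) (ha₀ : ∀ i < m, etaIter η i a 0 = 0)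
    (hb₀ : ∀ j < n, etaIter η j b 0 = 0) (hk : k < m + n) : etaIter η k (a * b) 0 = 0 := by
  rw [← vanishesToOrder_zero_iff] at ha hb
  induction k generalizing a b m n with
  | zero =>
    rcases Nat.eq_zero_or_pos m with rfl | hm
    · exact mul_eq_zero_of_right _ (hb₀ 0 (by omega))
    · exact mul_eq_zero_of_left (ha₀ 0 hm) _
  | succ k ih =>
    have left : etaIter η k (etaD η a * b) 0 = 0 :=
      ih (m := m - 1) (n := n) (ha.etaD hη) hb
        (fun i hi => etaIter_succ' η i a ▸ ha₀ (i + 1) (by omega)) hb₀ (by omega)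
    have right : etaIter η k (a * etaD η b) 0 = 0 :=
      ih (m := m) (n := n - 1) ha (hb.etaD hη) ha₀
        (fun j hj => etaIter_succ' η j b ▸ hb₀ (j + 1) (by omega)) (by omega)
    rw [etaIter_succ', (etaIter_congr (etaD_mul ha hb)).self_of_nhds,
      (etaIter_add hη ((ha.etaD hη).mul hb) (ha.mul (hb.etaD hη))).self_of_nhds, Pi.add_apply,
      left, right, add_zero]

-- Euler's relation reads `n h ≡ l · ∂_w h + m · ∂_v h` modulo `𝔪ⁿ⁺¹` with `v = η(0)`, and
-- `∂_v h ≡ η h` modulo `𝔪ⁿ`, so that the claim follows by induction from the one for `η h`.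
theorem exists_vanishesToOrder_sub_mul {l m : ℝ × ℝ →L[ℝ] ℝ} {w : ℝ × ℝ}
    (basis : ∀ p, l p • w + m p • η 0 = p) (hη : ContDiffAt ℝ ∞ η 0) (hh : VanishesToOrder n h)
    (hh₀ : etaIter η n h 0 = 0) :
    ∃ q, VanishesToOrder (n - 1) q ∧ VanishesToOrder (n + 1) (h - ⇑l * q) := by
  induction n generalizing h with
  | zero =>
    refine ⟨0, .zero, ?_⟩
    rw [mul_zero, sub_zero]
    exact vanishesToOrder_one_iff.2 ⟨hh.1, hh₀⟩
  | succ n ih =>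
    have hm : VanishesToOrder 1 m := vanishesToOrder_one_clm m
    have hηh := hh.etaD hη
    obtain ⟨q, hq, hηq⟩ := ih hηh (etaIter_succ' η n h ▸ hh₀)
    have hc : ((n + 1 : ℕ) : ℝ) ≠ 0 := Nat.cast_ne_zero.2 n.succ_ne_zero
    set c : ℝ := ((n + 1 : ℕ) : ℝ)
    let Dw : ℝ × ℝ → ℝ := fun p => fderiv ℝ h p w
    let R : ℝ × ℝ → ℝ := fun p => fderiv ℝ h p (η 0 - η p)
    have hDw : VanishesToOrder n Dw := hh.fderiv.clm_comp (ContinuousLinearMap.apply ℝ ℝ w)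
    have hR : VanishesToOrder (n + 1) R :=
      hh.fderiv.bilinear (ContinuousLinearMap.id ℝ (ℝ × ℝ →L[ℝ] ℝ))
        (vanishesToOrder_one_iff.2 ⟨contDiffAt_const.sub hη, sub_self _⟩)
    refine ⟨c⁻¹ • (Dw + m * q), (hDw.add ((hm.mul hq).mono (by omega))).const_smul _, ?_⟩
    have euler : h - l * c⁻¹ • (Dw + m * q) =
        c⁻¹ • (m * (etaD η h - l * q) + m * R - ((fun p => fderiv ℝ h p p) - c • h)) := by
      funext p
      have along_basis := congrArg (fderiv ℝ h p) (basis p)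
      simp only [map_add, map_smul, smul_eq_mul] at along_basis
      simp only [Pi.sub_apply, Pi.add_apply, Pi.mul_apply, Pi.smul_apply, smul_eq_mul, etaD, Dw, R,
        map_sub]
      field_simp
      linear_combination -along_basis
    rw [euler]
    exact ((((hm.mul hηq).mono (by omega)).add ((hm.mul hR).mono (by omega))).sub
      hh.fderiv_apply_self_sub_smul).const_smul _

end VectorField

section TangentBranches

variable {η : ℝ × ℝ → ℝ × ℝ} {g a b : ℝ × ℝ → ℝ} {v : ℝ × ℝ}

theorem dop_dop_apply_zero_of_vanishesToOrder_sub_mul (ha : VanishesToOrder 1 a)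
    (hb : VanishesToOrder 1 b) (h : VanishesToOrder 3 (g - a * b)) (u w : ℝ × ℝ) :
    dop u (dop w g) 0 = fderiv ℝ a 0 u * fderiv ℝ b 0 w + fderiv ℝ a 0 w * fderiv ℝ b 0 u := by
  let ηu : ℝ × ℝ → ℝ × ℝ := fun _ => u
  let ηw : ℝ × ℝ → ℝ × ℝ := fun _ => w
  have hηw : ContDiffAt ℝ ∞ ηw 0 := contDiffAt_const
  have hab := ha.mul hb
  have first : etaD ηw g =ᶠ[𝓝 0] etaD ηw a * b + a * etaD ηw b + etaD ηw (g - a * b) := by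
    have split := etaD_add (η := ηw) hab h
    rw [add_sub_cancel] at split
    exact split.trans ((etaD_mul ha hb).add .rfl)
  have ha' := ha.etaD hηw
  have hb' := hb.etaD hηw
  have second : etaD ηu (etaD ηw g) 0 =
      etaD ηu (etaD ηw a * b) 0 + etaD ηu (a * etaD ηw b) 0 := by
    rw [(etaD_congr first).self_of_nhds,
      (etaD_add (((ha'.mul hb).mono zero_le_one).add ((ha.mul hb').mono zero_le_one))
        (h.etaD hηw)).self_of_nhds, Pi.add_apply,
      (etaD_add (ha'.mul hb) (ha.mul hb')).self_of_nhds, Pi.add_apply,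
      ((h.etaD hηw).etaD contDiffAt_const).apply_zero one_pos, add_zero]
  refine second.trans ?_
  rw [(etaD_mul ha' hb).self_of_nhds, (etaD_mul ha hb').self_of_nhds]
  simp only [Pi.add_apply, Pi.mul_apply, ha.apply_zero one_pos, hb.apply_zero one_pos, mul_zero,
    zero_mul, zero_add, add_zero]
  simp only [etaD, ηu, ηw]
  ring

theorem exists_dual_basis (hv : v ≠ 0) :
    ∃ (l m : ℝ × ℝ →L[ℝ] ℝ) (w : ℝ × ℝ), (∀ p, l p • w + m p • v = p) ∧ l v = 0 ∧ l w = 1 := by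
  obtain ⟨x, y⟩ := v
  have hd : x ^ 2 + y ^ 2 ≠ 0 := by
    contrapose! hv
    exact Prod.ext (by simp; nlinarith) (by simp; nlinarith)
  let X := ContinuousLinearMap.fst ℝ ℝ ℝ
  let Y := ContinuousLinearMap.snd ℝ ℝ ℝ
  let d := x ^ 2 + y ^ 2
  refine ⟨y • X - x • Y, (x / d) • X + (y / d) • Y, (y / d, -x / d),
    fun p => Prod.ext ?_ ?_, ?_, ?_⟩
  all_goals
    simp only [sub_apply, add_apply, smul_apply, ContinuousLinearMap.coe_fst',
      ContinuousLinearMap.coe_snd', smul_eq_mul, Prod.smul_mk, Prod.mk_add_mk, X, Y, d]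
    grind

theorem rank_eq_one_iff_of_fin_two {K : Type*} [Field K] (M : Matrix (Fin 2) (Fin 2) K) :
    M.rank = 1 ↔ M.det = 0 ∧ M ≠ 0 := by
  have rank_nullity : M.rank + Module.finrank K (LinearMap.ker M.mulVecLin) = 2 :=
    M.mulVecLin.finrank_range_add_finrank_ker.trans (Module.finrank_fin_fun K)
  have det_eq_zero : M.det = 0 ↔ 1 ≤ Module.finrank K (LinearMap.ker M.mulVecLin) := by
    rw [Submodule.one_le_finrank_iff, Ne, Matrix.ker_mulVecLin_eq_bot_iff,
      ← Matrix.exists_mulVec_eq_zero_iff]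
    push Not
    simp only [and_comm]
  have ne_zero : M ≠ 0 ↔ 1 ≤ M.rank := by
    rw [Matrix.rank, Submodule.one_le_finrank_iff, Ne, Ne, LinearMap.range_eq_bot]
    exact not_congr (Matrix.toLin'.map_eq_zero_iff (x := M)).symm
  rw [det_eq_zero, ne_zero]
  omega

theorem clm_prod_eq_zero_iff (l : ℝ × ℝ →L[ℝ] ℝ) : l = 0 ↔ l (1, 0) = 0 ∧ l (0, 1) = 0 := by
  refine ⟨fun h => by simp [h], fun ⟨hx, hy⟩ => ?_⟩
  ext <;> simpa

theorem clm_prod_apply (l : ℝ × ℝ →L[ℝ] ℝ) (p : ℝ × ℝ) :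
    l p = p.1 * l (1, 0) + p.2 * l (0, 1) := by
  rw [← smul_eq_mul, ← smul_eq_mul, ← map_smul, ← map_smul, ← map_add]
  simp

theorem clm_prod_wronskian_eq_zero_iff {α β : ℝ × ℝ →L[ℝ] ℝ} (hv : v ≠ 0) (hαv : α v = 0)
    (hα : α ≠ 0) : α (1, 0) * β (0, 1) - α (0, 1) * β (1, 0) = 0 ↔ β v = 0 := by
  rw [clm_prod_apply α v] at hαv
  rw [clm_prod_apply β v]
  rw [Ne, clm_prod_eq_zero_iff] at hα
  constructor
  · intro h
    by_contra hβ
    exact hα ⟨(mul_eq_zero.1 (by linear_combination v.2 * h + β (1, 0) * hαv)).resolve_right hβ,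
      (mul_eq_zero.1 (by linear_combination -v.1 * h + β (0, 1) * hαv)).resolve_right hβ⟩
  · intro hβ
    by_contra h
    exact hv (Prod.ext
      ((mul_eq_zero.1 (by linear_combination β (0, 1) * hαv - α (0, 1) * hβ)).resolve_right h)
      ((mul_eq_zero.1 (by linear_combination α (1, 0) * hβ - β (1, 0) * hαv)).resolve_right h))

theorem rank_hess_eq_one_iff (ha : VanishesToOrder 1 a) (hb : VanishesToOrder 1 b)
    (h : VanishesToOrder 3 (g - a * b)) (hv : v ≠ 0) (hav : fderiv ℝ a 0 v = 0)
    (ha' : fderiv ℝ a 0 ≠ 0) :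
    (hess g).rank = 1 ↔ fderiv ℝ b 0 v = 0 ∧ fderiv ℝ b 0 ≠ 0 := by
  have entry := dop_dop_apply_zero_of_vanishesToOrder_sub_mul ha hb h
  have wronskian := clm_prod_wronskian_eq_zero_iff (β := fderiv ℝ b 0) hv hav ha'
  set α := fderiv ℝ a 0
  set β := fderiv ℝ b 0
  have det_hess : (hess g).det = -(α (1, 0) * β (0, 1) - α (0, 1) * β (1, 0)) ^ 2 := by
    rw [Matrix.det_fin_two]
    simp only [hess, pdx, pdy, entry, Matrix.of_apply, Matrix.cons_val]
    ring
  rw [rank_eq_one_iff_of_fin_two, det_hess, neg_eq_zero, sq_eq_zero_iff, wronskian]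
  refine and_congr_right fun hβ => not_congr ⟨fun hess_zero => ?_, fun hβ₀ => ?_⟩
  · have dependent := wronskian.2 hβ
    have xx := congrFun₂ hess_zero 0 0
    have xy := congrFun₂ hess_zero 0 1
    have yy := congrFun₂ hess_zero 1 1
    simp only [hess, pdx, pdy, entry, Matrix.of_apply, Matrix.cons_val, Matrix.zero_apply]
      at xx xy yy
    rw [Ne, clm_prod_eq_zero_iff] at ha'
    rw [clm_prod_eq_zero_iff]
    grind
  · ext i j
    fin_cases i <;> fin_cases j <;> simp [hess, pdx, pdy, entry, hβ₀]

/-- `a` is the local equation of a smooth curve through the origin with tangent vector `v`. -/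
structure IsBranchEquation (a : ℝ × ℝ → ℝ) (v : ℝ × ℝ) : Prop where
  vanishesToOrder : VanishesToOrder 1 a
  fderiv_apply : fderiv ℝ a 0 v = 0
  fderiv_ne_zero : fderiv ℝ a 0 ≠ 0

/-- Up to terms of order `4`, the zero set of `g` consists of two smooth curves through the origin
(possibly equal) with common tangent vector `v`. -/
def HasTangentBranches (g : ℝ × ℝ → ℝ) (v : ℝ × ℝ) : Prop :=
  ∃ a b, IsBranchEquation a v ∧ IsBranchEquation b v ∧ VanishesToOrder 4 (g - a * b)

theorem IsBranchEquation.etaIter_eq_zero (ha : IsBranchEquation a (η 0)) :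
    ∀ i < 2, etaIter η i a 0 = 0
  | 0, _ => ha.1.apply_zero one_pos
  | 1, _ => ha.2

theorem HasTangentBranches.etaIter_eq_zero (hη : ContDiffAt ℝ ∞ η 0)
    (hg : HasTangentBranches g (η 0)) {k : ℕ} (hk : k < 4) : etaIter η k g 0 = 0 := by
  obtain ⟨a, b, ha, hb, h⟩ := hg
  exact (etaIter_apply_zero_congr hη (ha.1.mul hb.1) (h.mono hk)).trans
    (etaIter_mul_apply_zero hη ha.1.1 hb.1.1 ha.etaIter_eq_zero hb.etaIter_eq_zero hk)

theorem HasTangentBranches.vanishesToOrder (hg : HasTangentBranches g v) :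
    VanishesToOrder 2 g := by
  obtain ⟨a, b, ha, hb, h⟩ := hg
  simpa only [add_sub_cancel] using (ha.1.mul hb.1).add (h.mono (by norm_num))

theorem HasTangentBranches.rank_hess (hg : HasTangentBranches g v) (hv : v ≠ 0) :
    (hess g).rank = 1 := by
  obtain ⟨a, b, ha, hb, h⟩ := hg
  exact (rank_hess_eq_one_iff ha.1 hb.1 (h.mono (by norm_num)) hv ha.2 ha.3).2 ⟨hb.2, hb.3⟩

theorem hasTangentBranches_of_etaIter_eq_zero (hη : ContDiffAt ℝ ∞ η 0) (hη₀ : η 0 ≠ 0)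
    (hg : VanishesToOrder 2 g) (hrank : (hess g).rank = 1) (h₂ : etaIter η 2 g 0 = 0)
    (h₃ : etaIter η 3 g 0 = 0) : HasTangentBranches g (η 0) := by
  obtain ⟨l, m, w, basis, hlv, hlw⟩ := exists_dual_basis hη₀
  have hl : IsBranchEquation l (η 0) :=
    ⟨vanishesToOrder_one_clm l, by rw [l.fderiv, hlv], by rw [l.fderiv]; rintro rfl; simp at hlw⟩
  obtain ⟨q, hq, hgq⟩ := exists_vanishesToOrder_sub_mul basis hη hg h₂
  obtain ⟨hqv, hq'⟩ := (rank_hess_eq_one_iff hl.1 hq hgq hη₀ hl.2 hl.3).1 hrank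
  have hqb : IsBranchEquation q (η 0) := ⟨hq, hqv, hq'⟩
  have hr : etaIter η 3 (g - l * q) 0 = 0 := by
    have hlq : etaIter η 3 (l * q) 0 = 0 :=
      etaIter_mul_apply_zero hη hl.1.1 hq.1 hl.etaIter_eq_zero hqb.etaIter_eq_zero (by norm_num)
    have split := (etaIter_add (k := 3) hη (hl.1.mul hq) hgq).self_of_nhds
    rw [add_sub_cancel, h₃, Pi.add_apply, hlq, zero_add] at split
    exact split.symm
  obtain ⟨r, hr, hgr⟩ := exists_vanishesToOrder_sub_mul basis hη hgq hr
  have hqr : fderiv ℝ (q + r) 0 = fderiv ℝ q 0 := by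
    rw [fderiv_add hq.eventually_differentiableAt.self_of_nhds
      hr.eventually_differentiableAt.self_of_nhds, hr.fderiv_apply_zero le_rfl, add_zero]
  refine ⟨l, q + r, hl, ⟨hq.add (hr.mono one_le_two), hqr ▸ hqv, hqr ▸ hq'⟩, ?_⟩
  rwa [mul_add, ← sub_sub]

theorem hasTangentBranches_iff (hη : ContDiffAt ℝ ∞ η 0) (hη₀ : η 0 ≠ 0)
    (hg : VanishesToOrder 1 g) :
    HasTangentBranches g (η 0) ↔ fderiv ℝ g 0 = 0 ∧ (hess g).rank = 1 ∧
      etaIter η 2 g 0 = 0 ∧ etaIter η 3 g 0 = 0 := by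
  constructor
  · intro h
    exact ⟨h.vanishesToOrder.fderiv_apply_zero le_rfl, h.rank_hess hη₀,
      h.etaIter_eq_zero hη (by norm_num), h.etaIter_eq_zero hη (by norm_num)⟩
  · rintro ⟨hg', hrank, h₂, h₃⟩
    have hg₂ : VanishesToOrder 2 g := vanishesToOrder_succ_iff.2
      ⟨hg.1, hg.apply_zero one_pos, vanishesToOrder_one_iff.2 ⟨hg.fderiv.1, hg'⟩⟩
    exact hasTangentBranches_of_etaIter_eq_zero hη hη₀ hg₂ hrank h₂ h₃

end TangentBranches

section CoordinateChange

universe u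

variable {E F : Type u} [NormedAddCommGroup E] [NormedSpace ℝ E] [NormedAddCommGroup F]
  [NormedSpace ℝ F] {n : ℕ} {φ ψ : E → E}

theorem VanishesToOrder.sub_trans {f g h : E → F} (hfg : VanishesToOrder n (f - g))
    (hgh : VanishesToOrder n (g - h)) : VanishesToOrder n (f - h) := by
  simpa only [sub_add_sub_cancel] using hfg.add hgh

theorem VanishesToOrder.sub_comm {f g : E → F} (h : VanishesToOrder n (f - g)) :
    VanishesToOrder n (g - f) := by
  simpa only [neg_sub] using h.neg

theorem VanishesToOrder.fderiv_eq_of_sub {f g : E → F} (h : VanishesToOrder 2 (f - g))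
    (hg : ContDiffAt ℝ ∞ g 0) : fderiv ℝ f 0 = fderiv ℝ g 0 := by
  rw [← sub_add_cancel f g, fderiv_add h.eventually_differentiableAt.self_of_nhds
    (hg.differentiableAt (by simp)), h.fderiv_apply_zero le_rfl, zero_add]

theorem VanishesToOrder.sub_fderiv {f : E → F} (hf : VanishesToOrder 1 f) :
    VanishesToOrder 2 (f - ⇑(fderiv ℝ f 0)) := by
  have hL := vanishesToOrder_one_clm (fderiv ℝ f 0)
  refine vanishesToOrder_succ_iff.2 ⟨hf.1.sub hL.1, (hf.sub hL).apply_zero one_pos,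
    vanishesToOrder_one_iff.2 ⟨(hf.sub hL).fderiv.1, ?_⟩⟩
  rw [fderiv_sub hf.eventually_differentiableAt.self_of_nhds
    hL.eventually_differentiableAt.self_of_nhds, ContinuousLinearMap.fderiv, sub_self]

/-- `φ` is a globally defined smooth map whose germ at the origin is a local coordinate change
fixing the origin. -/
structure IsCoordinateChange (φ : E → E) : Prop where
  contDiff : ContDiff ℝ ∞ φ
  map_zero : φ 0 = 0
  bijective : Function.Bijective (fderiv ℝ φ 0)

namespace IsCoordinateChange

theorem vanishesToOrder (hφ : IsCoordinateChange φ) : VanishesToOrder 1 φ :=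
  vanishesToOrder_one_iff.2 ⟨hφ.contDiff.contDiffAt, hφ.map_zero⟩

protected theorem continuousLinearEquiv (L : E ≃L[ℝ] E) : IsCoordinateChange L :=
  ⟨L.contDiff, L.map_zero, by rw [L.fderiv]; exact L.bijective⟩

protected theorem id : IsCoordinateChange (id : E → E) :=
  .continuousLinearEquiv (.refl ℝ E)

protected theorem comp (hφ : IsCoordinateChange φ) (hψ : IsCoordinateChange ψ) :
    IsCoordinateChange (φ ∘ ψ) := by
  refine ⟨hφ.contDiff.comp hψ.contDiff, by simp [hφ.map_zero, hψ.map_zero], ?_⟩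
  rw [hφ.vanishesToOrder.fderiv_comp_zero hψ.vanishesToOrder]
  exact hφ.bijective.comp hψ.bijective

protected theorem congr (hφ : IsCoordinateChange φ) (hψ : ContDiff ℝ ∞ ψ)
    (h : VanishesToOrder 2 (ψ - φ)) : IsCoordinateChange ψ := by
  refine ⟨hψ, ?_, h.fderiv_eq_of_sub hφ.contDiff.contDiffAt ▸ hφ.bijective⟩
  simpa [hφ.map_zero] using h.apply_zero two_pos

-- Newton's iteration `χ ↦ χ - L⁻¹ ∘ (φ ∘ χ - id)` with fixed slope `L = Dφ(0)` gains one order of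
-- contact at each step.
theorem exists_right_inverse [CompleteSpace E] (hφ : IsCoordinateChange φ) (n : ℕ) :
    ∃ χ, IsCoordinateChange χ ∧ VanishesToOrder (n + 2) (φ ∘ χ - id) := by
  let L := ContinuousLinearEquiv.ofBijective (fderiv ℝ φ 0)
    (LinearMap.ker_eq_bot.2 hφ.bijective.1) (LinearMap.range_eq_top.2 hφ.bijective.2)
  have hL : VanishesToOrder 2 (φ - ⇑L) := hφ.vanishesToOrder.sub_fderiv
  induction n with
  | zero =>
    have hLsymm := IsCoordinateChange.continuousLinearEquiv L.symm
    refine ⟨L.symm, hLsymm, ?_⟩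
    convert! hL.comp hLsymm.vanishesToOrder using 1
    ext p
    simp
  | succ n ih =>
    obtain ⟨χ, hχ, hφχ⟩ := ih
    let χ' : E → E := χ - ⇑L.symm ∘ (φ ∘ χ - id)
    have hχ'χ : VanishesToOrder (n + 2) (χ' - χ) := by
      rw [sub_sub_cancel_left]
      exact (hφχ.clm_comp (L.symm : E →L[ℝ] E)).neg
    have hχ' : IsCoordinateChange χ' := by
      refine hχ.congr ?_ (hχ'χ.mono (by omega))
      exact hχ.contDiff.sub (L.symm.contDiff.comp ((hφ.contDiff.comp hχ.contDiff).sub contDiff_id))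
    refine ⟨χ', hχ', ?_⟩
    have remainder := hL.comp_sub_comp hχ'.vanishesToOrder hχ.vanishesToOrder hχ'χ
    convert! remainder.mono (show n + 1 + 2 ≤ _ by omega) using 1
    ext p
    simp only [map_comp_sub, CompTriple.comp_eq, Pi.sub_apply, Function.comp_apply, id_eq, map_sub,
      ContinuousLinearEquiv.apply_symm_apply, χ']
    abel

theorem exists_inverse [CompleteSpace E] (hφ : IsCoordinateChange φ) (n : ℕ) :
    ∃ χ, IsCoordinateChange χ ∧ VanishesToOrder n (φ ∘ χ - id) ∧
      VanishesToOrder n (χ ∘ φ - id) := by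
  obtain ⟨χ, hχ, right⟩ := hφ.exists_right_inverse n
  obtain ⟨ξ, hξ, left⟩ := hχ.exists_right_inverse n
  have hξφ : VanishesToOrder (n + 2) (ξ - φ) := by
    have collapse := VanishesToOrder.comp_sub_comp_of_contDiffAt hφ.contDiff.contDiffAt
      (hχ.comp hξ).vanishesToOrder IsCoordinateChange.id.vanishesToOrder left
    exact VanishesToOrder.sub_trans (right.comp hξ.vanishesToOrder).sub_comm collapse
  have hχφ := VanishesToOrder.comp_sub_comp_of_contDiffAt hχ.contDiff.contDiffAt
    hφ.vanishesToOrder hξ.vanishesToOrder hξφ.sub_comm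
  exact ⟨χ, hχ, right.mono (by omega), (hχφ.sub_trans left).mono (by omega)⟩

end IsCoordinateChange

end CoordinateChange

section JetEquivalence

variable {f g h φ ψ : ℝ × ℝ → ℝ × ℝ} {r : ℕ}

theorem jetEquiv_iff (hf : VanishesToOrder 1 f) (hg : ContDiffAt ℝ ∞ g 0) :
    JetEquiv r f g ↔ ∃ φ ψ, IsCoordinateChange φ ∧ IsCoordinateChange ψ ∧
      VanishesToOrder (r + 1) (ψ ∘ f ∘ φ - g) := by
  have jets {φ ψ} (hφ : IsCoordinateChange φ) (hψ : IsCoordinateChange ψ) :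
      (∀ i ≤ r, iteratedFDeriv ℝ i (ψ ∘ f ∘ φ) 0 = iteratedFDeriv ℝ i g 0) ↔
        VanishesToOrder (r + 1) (ψ ∘ f ∘ φ - g) :=
    iteratedFDeriv_eq_iff_vanishesToOrder_sub
      (hψ.vanishesToOrder.comp (hf.comp hφ.vanishesToOrder)).1 hg
  constructor
  · rintro ⟨φ, ψ, hφ, hψ, hφ₀, hψ₀, hφ', hψ', h⟩
    exact ⟨φ, ψ, ⟨hφ, hφ₀, hφ'⟩, ⟨hψ, hψ₀, hψ'⟩, (jets ⟨hφ, hφ₀, hφ'⟩ ⟨hψ, hψ₀, hψ'⟩).1 h⟩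
  · rintro ⟨φ, ψ, hφ, hψ, h⟩
    exact ⟨φ, ψ, hφ.1, hψ.1, hφ.2, hψ.2, hφ.3, hψ.3, (jets hφ hψ).2 h⟩

namespace JetEquiv

theorem of_comp (hf : VanishesToOrder 1 f) (hg : ContDiffAt ℝ ∞ g 0) (hφ : IsCoordinateChange φ)
    (hψ : IsCoordinateChange ψ) (h : VanishesToOrder (r + 1) (ψ ∘ f ∘ φ - g)) : JetEquiv r f g :=
  (jetEquiv_iff hf hg).2 ⟨φ, ψ, hφ, hψ, h⟩

theorem of_vanishesToOrder_sub (hf : VanishesToOrder 1 f) (hg : ContDiffAt ℝ ∞ g 0)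
    (h : VanishesToOrder (r + 1) (f - g)) : JetEquiv r f g :=
  of_comp hf hg .id .id h

protected theorem trans (hf : VanishesToOrder 1 f) (hg : VanishesToOrder 1 g)
    (hh : ContDiffAt ℝ ∞ h 0) (hfg : JetEquiv r f g) (hgh : JetEquiv r g h) : JetEquiv r f h := by
  obtain ⟨φ, ψ, hφ, hψ, hfg⟩ := (jetEquiv_iff hf hg.1).1 hfg
  obtain ⟨φ', ψ', hφ', hψ', hgh⟩ := (jetEquiv_iff hg hh).1 hgh
  refine of_comp hf hh (hφ.comp hφ') (hψ'.comp hψ) (VanishesToOrder.sub_trans ?_ hgh)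
  exact (VanishesToOrder.comp_sub_comp_of_contDiffAt hψ'.contDiff.contDiffAt
    (hψ.vanishesToOrder.comp (hf.comp hφ.vanishesToOrder)) hg hfg).comp hφ'.vanishesToOrder

protected theorem symm (hf : VanishesToOrder 1 f) (hg : VanishesToOrder 1 g)
    (hfg : JetEquiv r f g) : JetEquiv r g f := by
  obtain ⟨φ, ψ, hφ, hψ, hfg⟩ := (jetEquiv_iff hf hg.1).1 hfg
  obtain ⟨φ', hφ', hφφ', -⟩ := hφ.exists_inverse (r + 1)
  obtain ⟨ψ', hψ', -, hψ'ψ⟩ := hψ.exists_inverse (r + 1)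
  have hfφ := hf.comp hφ.vanishesToOrder
  refine of_comp hg hf.1 hφ' hψ' ?_
  have replace_g : VanishesToOrder (r + 1) (ψ' ∘ g ∘ φ' - ψ' ∘ (ψ ∘ f ∘ φ) ∘ φ') :=
    (VanishesToOrder.comp_sub_comp_of_contDiffAt hψ'.contDiff.contDiffAt hg
      (hψ.vanishesToOrder.comp hfφ) hfg.sub_comm).comp hφ'.vanishesToOrder
  have cancel_ψ : VanishesToOrder (r + 1) (ψ' ∘ (ψ ∘ f ∘ φ) ∘ φ' - (f ∘ φ) ∘ φ') :=
    hψ'ψ.comp (hfφ.comp hφ'.vanishesToOrder)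
  have cancel_φ : VanishesToOrder (r + 1) ((f ∘ φ) ∘ φ' - f) :=
    VanishesToOrder.comp_sub_comp_of_contDiffAt hf.1 (hφ.comp hφ').vanishesToOrder
      IsCoordinateChange.id.vanishesToOrder hφφ'
  exact replace_g.sub_trans (cancel_ψ.sub_trans cancel_φ)

end JetEquiv

end JetEquivalence

section JacobianDeterminant

variable {f g φ : ℝ × ℝ → ℝ × ℝ} {p : ℝ × ℝ} {n : ℕ}

theorem jacDet_eq_det_fderiv (f : ℝ × ℝ → ℝ × ℝ) (p : ℝ × ℝ) :
    jacDet f p = LinearMap.det (fderiv ℝ f p : ℝ × ℝ →ₗ[ℝ] ℝ × ℝ) := by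
  rw [← LinearMap.det_toMatrix (Module.Basis.finTwoProd ℝ), Matrix.det_fin_two]
  simp only [jacDet, LinearMap.toMatrix_apply, Module.Basis.finTwoProd_zero,
    Module.Basis.finTwoProd_one, Module.Basis.coe_finTwoProd_repr, Matrix.cons_val,
    ContinuousLinearMap.coe_coe]
  ring

theorem jacDet_ne_zero_iff : jacDet f p ≠ 0 ↔ Function.Bijective (fderiv ℝ f p) := by
  rw [jacDet_eq_det_fderiv, ← isUnit_iff_ne_zero, ← LinearMap.isUnit_iff_isUnit_det,
    Module.End.isUnit_iff, ContinuousLinearMap.coe_coe]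

theorem jacDet_comp (hf : DifferentiableAt ℝ f (φ p)) (hφ : DifferentiableAt ℝ φ p) :
    jacDet (f ∘ φ) p = jacDet f (φ p) * jacDet φ p := by
  simp only [jacDet_eq_det_fderiv, fderiv_comp p hf hφ, ContinuousLinearMap.toLinearMap_comp,
    LinearMap.det_comp]

theorem jacDet_comp_eventuallyEq {m : ℕ} (hf : VanishesToOrder m f) (hφ : VanishesToOrder 1 φ) :
    jacDet (f ∘ φ) =ᶠ[𝓝 0] jacDet f ∘ φ * jacDet φ := by
  filter_upwards [hφ.eventually_differentiableAt,
    (hφ.tendsto_zero one_pos).eventually hf.eventually_differentiableAt] with p hφp hfp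
    using jacDet_comp hfp hφp

theorem VanishesToOrder.mul_sub_mul {a b c d : ℝ × ℝ → ℝ} (hb : ContDiffAt ℝ ∞ b 0)
    (hc : ContDiffAt ℝ ∞ c 0) (hac : VanishesToOrder n (a - c)) (hbd : VanishesToOrder n (b - d)) :
    VanishesToOrder n (a * b - c * d) := by
  have split : a * b - c * d = (a - c) * b + c * (b - d) := by ring
  rw [← vanishesToOrder_zero_iff] at hb hc
  rw [split]
  exact (hac.mul hb).add ((hc.mul hbd).mono (by omega))

theorem vanishesToOrder_jacDet_sub_jacDet (hf : ContDiffAt ℝ ∞ f 0) (hg : ContDiffAt ℝ ∞ g 0)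
    (h : VanishesToOrder (n + 1) (f - g)) : VanishesToOrder n (jacDet f - jacDet g) := by
  rw [← vanishesToOrder_zero_iff] at hf hg
  let entry (l : ℝ × ℝ →L[ℝ] ℝ) (u : ℝ × ℝ) (f : ℝ × ℝ → ℝ × ℝ) : ℝ × ℝ → ℝ :=
    fun p => l (fderiv ℝ f p u)
  have hentry {k : ℕ} (l u) {f} (hf : VanishesToOrder k f) :
      VanishesToOrder (k - 1) (entry l u f) :=
    hf.fderiv.clm_comp (l.comp (ContinuousLinearMap.apply ℝ (ℝ × ℝ) u))
  have hentry_sub (l u) : VanishesToOrder n (entry l u f - entry l u g) := by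
    refine (hentry l u h).congr ?_
    filter_upwards [hf.eventually_differentiableAt, hg.eventually_differentiableAt] with p hfp hgp
    simp only [entry, Pi.sub_apply, fderiv_sub hfp hgp, sub_apply, map_sub]
  have product (l l' u u') :
      VanishesToOrder n (entry l u f * entry l' u' f - entry l u g * entry l' u' g) :=
    .mul_sub_mul (hentry l' u' hf).1 (hentry l u hg).1 (hentry_sub l u) (hentry_sub l' u')
  have jacDet_eq (f : ℝ × ℝ → ℝ × ℝ) : jacDet f =
      entry (.fst ℝ ℝ ℝ) (1, 0) f * entry (.snd ℝ ℝ ℝ) (0, 1) f -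
        entry (.snd ℝ ℝ ℝ) (1, 0) f * entry (.fst ℝ ℝ ℝ) (0, 1) f := rfl
  rw [jacDet_eq, jacDet_eq, sub_sub_sub_comm]
  exact (product ..).sub (product ..)

theorem contDiffAt_jacDet (hf : ContDiffAt ℝ ∞ f 0) : ContDiffAt ℝ ∞ (jacDet f) 0 := by
  have column (u : ℝ × ℝ) : ContDiffAt ℝ ∞ (fun p => fderiv ℝ f p u) 0 :=
    (hf.fderiv_right (by simp)).clm_apply contDiffAt_const
  exact ((column _).fst.mul (column _).snd).sub ((column _).snd.mul (column _).fst)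

end JacobianDeterminant

section TangentBranchesTransport

variable {g h a b u : ℝ × ℝ → ℝ} {φ : ℝ × ℝ → ℝ × ℝ} {v : ℝ × ℝ}

protected theorem IsBranchEquation.smul (ha : IsBranchEquation a v) (t : ℝ) :
    IsBranchEquation a (t • v) :=
  ⟨ha.1, by rw [map_smul, ha.2, smul_zero], ha.3⟩

protected theorem IsBranchEquation.mul (ha : IsBranchEquation a v) (hu : ContDiffAt ℝ ∞ u 0)
    (hu₀ : u 0 ≠ 0) : IsBranchEquation (a * u) v := by
  rw [← vanishesToOrder_zero_iff] at hu
  have fderiv_mul : fderiv ℝ (a * u) 0 = u 0 • fderiv ℝ a 0 := by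
    rw [_root_.fderiv_mul ha.1.eventually_differentiableAt.self_of_nhds
      hu.eventually_differentiableAt.self_of_nhds, ha.1.apply_zero one_pos, zero_smul, zero_add]
  refine ⟨ha.1.mul hu, ?_, ?_⟩
  · rw [fderiv_mul, smul_apply, ha.2, smul_zero]
  · rw [fderiv_mul]
    exact smul_ne_zero hu₀ ha.3

protected theorem IsBranchEquation.comp (hφ : IsCoordinateChange φ)
    (ha : IsBranchEquation a (fderiv ℝ φ 0 v)) : IsBranchEquation (a ∘ φ) v := by
  have chain (u) : fderiv ℝ (a ∘ φ) 0 u = fderiv ℝ a 0 (fderiv ℝ φ 0 u) := by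
    rw [ha.1.fderiv_comp_zero hφ.vanishesToOrder, ContinuousLinearMap.comp_apply]
  refine ⟨ha.1.comp hφ.vanishesToOrder, (chain v).trans ha.2, fun h₀ => ha.3 ?_⟩
  refine ContinuousLinearMap.ext (hφ.bijective.2.forall.2 fun u => ?_)
  rw [← chain, h₀, zero_apply, zero_apply]

namespace HasTangentBranches

protected theorem smul (hg : HasTangentBranches g v) (t : ℝ) : HasTangentBranches g (t • v) := by
  obtain ⟨a, b, ha, hb, h⟩ := hg
  exact ⟨a, b, ha.smul t, hb.smul t, h⟩

protected theorem congr (hg : HasTangentBranches g v) (hgh : VanishesToOrder 4 (h - g)) :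
    HasTangentBranches h v := by
  obtain ⟨a, b, ha, hb, hab⟩ := hg
  exact ⟨a, b, ha, hb, hgh.sub_trans hab⟩

protected theorem mul (hg : HasTangentBranches g v) (hu : ContDiffAt ℝ ∞ u 0) (hu₀ : u 0 ≠ 0) :
    HasTangentBranches (g * u) v := by
  obtain ⟨a, b, ha, hb, hab⟩ := hg
  refine ⟨a, b * u, ha, hb.mul hu hu₀, ?_⟩
  rw [← mul_assoc, ← sub_mul]
  exact hab.mul (vanishesToOrder_zero_iff.2 hu)

protected theorem comp (hφ : IsCoordinateChange φ)
    (hg : HasTangentBranches g (fderiv ℝ φ 0 v)) : HasTangentBranches (g ∘ φ) v := by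
  obtain ⟨a, b, ha, hb, hab⟩ := hg
  exact ⟨a ∘ φ, b ∘ φ, ha.comp hφ, hb.comp hφ, hab.comp hφ.vanishesToOrder⟩

end HasTangentBranches

/-- `v` spans a line in the kernel of `Df(0)` and the singular set of `f` consists, up to terms of
order `4`, of two smooth curves tangent to that line. -/
structure HasNullTangentBranches (f : ℝ × ℝ → ℝ × ℝ) (v : ℝ × ℝ) : Prop where
  ne_zero : v ≠ 0
  fderiv_apply : fderiv ℝ f 0 v = 0
  branches : HasTangentBranches (jacDet f) v

namespace HasNullTangentBranches

variable {f g ψ : ℝ × ℝ → ℝ × ℝ}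

protected theorem smul (hf : HasNullTangentBranches f v) {t : ℝ} (ht : t ≠ 0) :
    HasNullTangentBranches f (t • v) :=
  ⟨smul_ne_zero ht hf.1, by rw [map_smul, hf.2, smul_zero], hf.3.smul t⟩

protected theorem congr (hf : HasNullTangentBranches f v) (hfs : ContDiffAt ℝ ∞ f 0)
    (hgs : ContDiffAt ℝ ∞ g 0) (h : VanishesToOrder 5 (g - f)) : HasNullTangentBranches g v := by
  refine ⟨hf.1, ?_, hf.3.congr (vanishesToOrder_jacDet_sub_jacDet hgs hfs h)⟩
  rw [(h.mono (by norm_num)).fderiv_eq_of_sub hfs, hf.2]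

theorem comp_left (hf : HasNullTangentBranches f v) (hfs : VanishesToOrder 1 f)
    (hψ : IsCoordinateChange ψ) : HasNullTangentBranches (ψ ∘ f) v := by
  have hf₀ := hfs.apply_zero one_pos
  refine ⟨hf.1, ?_, ?_⟩
  · rw [hψ.vanishesToOrder.fderiv_comp_zero hfs, ContinuousLinearMap.comp_apply, hf.2, map_zero]
  · have unit := (vanishesToOrder_zero_iff.2 (contDiffAt_jacDet hψ.vanishesToOrder.1)).comp hfs
    refine (hf.3.mul unit.1 ?_).congr (VanishesToOrder.zero.congr ?_)
    · rw [Function.comp_apply, hf₀]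
      exact jacDet_ne_zero_iff.2 hψ.bijective
    · rw [mul_comm]
      exact (jacDet_comp_eventuallyEq hψ.vanishesToOrder hfs).sub_eq

theorem comp_right (hfs : VanishesToOrder 1 f) (hφ : IsCoordinateChange φ)
    (hf : HasNullTangentBranches f (fderiv ℝ φ 0 v)) : HasNullTangentBranches (f ∘ φ) v := by
  refine ⟨fun hv => hf.1 (by rw [hv, map_zero]), ?_, ?_⟩
  · rw [hfs.fderiv_comp_zero hφ.vanishesToOrder, ContinuousLinearMap.comp_apply, hf.2]
  · exact ((hf.3.comp hφ).mul (contDiffAt_jacDet hφ.vanishesToOrder.1)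
      (jacDet_ne_zero_iff.2 hφ.bijective)).congr
        (VanishesToOrder.zero.congr (jacDet_comp_eventuallyEq hfs hφ.vanishesToOrder).sub_eq)

theorem exists_of_jetEquiv (hfs : VanishesToOrder 1 f) (hgs : VanishesToOrder 1 g)
    (h : JetEquiv 4 f g) (hf : HasNullTangentBranches f v) : ∃ w, HasNullTangentBranches g w := by
  obtain ⟨φ, ψ, hφ, hψ, hfg⟩ := (jetEquiv_iff hfs hgs.1).1 h
  obtain ⟨w, rfl⟩ := hφ.bijective.2 v
  have hfφ := hfs.comp hφ.vanishesToOrder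
  exact ⟨w, ((comp_right hfs hφ hf).comp_left hfφ hψ).congr (hψ.vanishesToOrder.comp hfφ).1
    hgs.1 hfg.sub_comm⟩

end HasNullTangentBranches

end TangentBranchesTransport

section PrenormalForm

variable {f : ℝ × ℝ → ℝ × ℝ} {h k : ℝ × ℝ → ℝ} {n : ℕ}

/-- The map `(x, y) ↦ (x, h(x, y))`, to which every map-germ of corank one can be reduced. -/
def prenormalMap (h : ℝ × ℝ → ℝ) (p : ℝ × ℝ) : ℝ × ℝ :=
  (p.1, h p)

theorem vanishesToOrder_prenormalMap (hh : VanishesToOrder 1 h) :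
    VanishesToOrder 1 (prenormalMap h) :=
  vanishesToOrder_one_iff.2
    ⟨contDiffAt_fst.prodMk hh.1, Prod.ext rfl (hh.apply_zero one_pos)⟩

theorem vanishesToOrder_prenormalMap_sub (hhk : VanishesToOrder n (h - k)) :
    VanishesToOrder n (prenormalMap h - prenormalMap k) := by
  convert! hhk.clm_comp (.inr ℝ ℝ ℝ) using 1
  ext p <;> simp [prenormalMap]

theorem fderiv_prenormalMap_apply {p : ℝ × ℝ} (hh : DifferentiableAt ℝ h p) (v : ℝ × ℝ) :
    fderiv ℝ (prenormalMap h) p v = (v.1, fderiv ℝ h p v) := by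
  have key : HasFDerivAt (prenormalMap h) _ p := hasFDerivAt_fst.prodMk hh.hasFDerivAt
  rw [key.fderiv]
  rfl

theorem jacDet_prenormalMap (hh : Differentiable ℝ h) : jacDet (prenormalMap h) = pdy h := by
  funext p
  simp only [jacDet, fderiv_prenormalMap_apply (hh p), one_mul, mul_zero, sub_zero, pdy, dop]

theorem isCoordinateChange_prenormalMap (hh : ContDiff ℝ ∞ h) (hh₀ : h 0 = 0) (hy : pdy h 0 ≠ 0) :
    IsCoordinateChange (prenormalMap h) := by
  refine ⟨contDiff_fst.prodMk hh, Prod.ext rfl hh₀, jacDet_ne_zero_iff.1 ?_⟩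
  rwa [jacDet_prenormalMap (hh.differentiable (by simp))]

theorem exists_jetEquiv_prenormalMap (hf : ContDiff ℝ ∞ f) (hf₀ : f 0 = 0)
    (hf' : fderiv ℝ f 0 ≠ 0) (r : ℕ) :
    ∃ h, ContDiff ℝ ∞ h ∧ h 0 = 0 ∧ JetEquiv r f (prenormalMap h) := by
  have hf₁ : VanishesToOrder 1 f := vanishesToOrder_one_iff.2 ⟨hf.contDiffAt, hf₀⟩
  obtain ⟨L, hL⟩ : ∃ L : (ℝ × ℝ) ≃L[ℝ] ℝ × ℝ,
      (ContinuousLinearMap.fst ℝ ℝ ℝ).comp ((L : ℝ × ℝ →L[ℝ] ℝ × ℝ).comp (fderiv ℝ f 0)) ≠ 0 := by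
    by_contra! zero
    refine hf' (ContinuousLinearMap.ext fun u => Prod.ext ?_ ?_)
    · exact DFunLike.congr_fun (zero (.refl ℝ _)) u
    · exact DFunLike.congr_fun (zero (.prodComm ℝ ℝ ℝ)) u
  set α := (ContinuousLinearMap.fst ℝ ℝ ℝ).comp ((L : ℝ × ℝ →L[ℝ] ℝ × ℝ).comp (fderiv ℝ f 0))
  let m : ℝ × ℝ →L[ℝ] ℝ := α (1, 0) • .snd ℝ ℝ ℝ - α (0, 1) • .fst ℝ ℝ ℝ
  let Φ : ℝ × ℝ → ℝ × ℝ := fun p => ((L (f p)).1, m p)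
  have hΦ : IsCoordinateChange Φ := by
    have hΦ' : HasFDerivAt Φ (α.prod m) 0 :=
      (((ContinuousLinearMap.fst ℝ ℝ ℝ).comp (L : ℝ × ℝ →L[ℝ] ℝ × ℝ)).hasFDerivAt.comp 0
        (hf.differentiable (by simp) 0).hasFDerivAt).prodMk m.hasFDerivAt
    refine ⟨(contDiff_fst.comp (L.contDiff.comp hf)).prodMk m.contDiff, by simp [Φ, hf₀],
      jacDet_ne_zero_iff.1 ?_⟩
    have det : jacDet Φ 0 = α (1, 0) ^ 2 + α (0, 1) ^ 2 := by
      simp only [jacDet, hΦ'.fderiv, ContinuousLinearMap.prod_apply, sub_apply, smul_apply,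
        ContinuousLinearMap.coe_fst', ContinuousLinearMap.coe_snd', smul_eq_mul, m]
      ring
    rw [Ne, clm_prod_eq_zero_iff] at hL
    contrapose! hL
    constructor <;> nlinarith
  obtain ⟨χ, hχ, hΦχ, -⟩ := hΦ.exists_inverse (r + 1)
  have hLc := IsCoordinateChange.continuousLinearEquiv L
  let h : ℝ × ℝ → ℝ := fun p => (L (f (χ p))).2
  have hh : ContDiff ℝ ∞ h := contDiff_snd.comp (L.contDiff.comp (hf.comp hχ.contDiff))
  have hh₀ : h 0 = 0 := by simp [h, hχ.map_zero, hf₀]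
  refine ⟨h, hh, hh₀, .of_comp hf₁ (contDiff_fst.prodMk hh).contDiffAt hχ hLc ?_⟩
  convert! (hΦχ.clm_comp (.fst ℝ ℝ ℝ)).clm_comp (.inl ℝ ℝ ℝ) using 1
  ext p <;> simp [prenormalMap, h, Φ]

theorem HasNullTangentBranches.prenormalMap_vertical {v : ℝ × ℝ} (hh : Differentiable ℝ h)
    (hv : HasNullTangentBranches (prenormalMap h) v) :
    HasNullTangentBranches (prenormalMap h) (0, 1) := by
  have hv' := hv.fderiv_apply
  rw [fderiv_prenormalMap_apply (hh 0), Prod.mk_eq_zero] at hv'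
  have hv₂ : v.2 ≠ 0 := fun hv₂ => hv.ne_zero (Prod.ext hv'.1 hv₂)
  have direction : v.2⁻¹ • v = (0, 1) := Prod.ext (by simp [hv'.1]) (by simp [hv₂])
  exact direction ▸ hv.smul (inv_ne_zero hv₂)

theorem pdy_eq_deriv {p : ℝ × ℝ} (hh : DifferentiableAt ℝ h p) :
    pdy h p = deriv (fun y => h (p.1, y)) p.2 :=
  (hh.hasFDerivAt.comp_hasDerivAt p.2
    ((hasDerivAt_const p.2 p.1).prodMk (hasDerivAt_id p.2))).deriv.symm

theorem pdx_eq_deriv {p : ℝ × ℝ} (hh : DifferentiableAt ℝ h p) :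
    pdx h p = deriv (fun x => h (x, p.2)) p.1 :=
  (hh.hasFDerivAt.comp_hasDerivAt p.1
    ((hasDerivAt_id p.1).prodMk (hasDerivAt_const p.1 p.2))).deriv.symm

theorem contDiff_dop (v : ℝ × ℝ) (hh : ContDiff ℝ ∞ h) : ContDiff ℝ ∞ (dop v h) :=
  (hh.fderiv_right (by simp)).clm_apply contDiff_const

theorem dop_comm (hh : ContDiff ℝ ∞ h) (v w : ℝ × ℝ) : dop v (dop w h) = dop w (dop v h) := by
  have second (v w p : ℝ × ℝ) : dop v (dop w h) p = fderiv ℝ (fderiv ℝ h) p v w := by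
    have hh' : ContDiff ℝ ∞ (fderiv ℝ h) := hh.fderiv_right (by simp)
    have key : HasFDerivAt (dop w h) _ p :=
      (hh'.differentiable (by simp) p).hasFDerivAt.clm_apply (hasFDerivAt_const w p)
    rw [dop, key.fderiv]
    simp
  funext p
  rw [second, second]
  exact hh.contDiffAt.isSymmSndFDerivAt (by
    simp [minSmoothness_of_isRCLikeNormedField, ENat.LEInfty.out]) v w

theorem vanishesToOrder_of_pdx_of_pdy (hh : VanishesToOrder 1 h) (hx : VanishesToOrder n (pdx h))
    (hy : VanishesToOrder n (pdy h)) : VanishesToOrder (n + 1) h := by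
  refine vanishesToOrder_succ_iff.2 ⟨hh.1, hh.apply_zero one_pos, ?_⟩
  let smul (l : ℝ × ℝ →L[ℝ] ℝ) : ℝ →L[ℝ] ℝ × ℝ →L[ℝ] ℝ := .toSpanSingleton ℝ l
  convert! (hx.clm_comp (smul (.fst ℝ ℝ ℝ))).add (hy.clm_comp (smul (.snd ℝ ℝ ℝ))) using 1
  funext p
  ext <;> simp [smul, pdx, pdy, dop]

theorem vanishesToOrder_succ_of_pdy (hh : ContDiff ℝ ∞ h) (hx : ∀ x, h (x, 0) = 0)
    (hy : VanishesToOrder n (pdy h)) : VanishesToOrder (n + 1) h := by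
  have hh₁ : VanishesToOrder 1 h := vanishesToOrder_one_iff.2 ⟨hh.contDiffAt, hx 0⟩
  induction n generalizing h with
  | zero => exact hh₁
  | succ n ih =>
    have hpdx : ContDiff ℝ ∞ (pdx h) := contDiff_dop _ hh
    have hpdx₀ (x : ℝ) : pdx h (x, 0) = 0 := by
      simp [pdx_eq_deriv (hh.differentiable (by simp) _), hx]
    refine vanishesToOrder_of_pdx_of_pdy hh₁ (ih hpdx hpdx₀ ?_
      (vanishesToOrder_one_iff.2 ⟨hpdx.contDiffAt, hpdx₀ 0⟩)) hy
    rw [pdy, pdx, dop_comm hh]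
    exact hy.fderiv.clm_comp (.apply ℝ ℝ (1, 0))

theorem VanishesToOrder.exists_sub_quadratic (hh : VanishesToOrder 2 h) :
    ∃ A B C : ℝ, VanishesToOrder 3
      (h - fun p => A * p.1 ^ 2 + B * (p.1 * p.2) + C * p.2 ^ 2) := by
  let X := ContinuousLinearMap.fst ℝ ℝ ℝ
  let Y := ContinuousLinearMap.snd ℝ ℝ ℝ
  have hX : VanishesToOrder 1 X := vanishesToOrder_one_clm X
  have hY : VanishesToOrder 1 Y := vanishesToOrder_one_clm Y
  have hhx : VanishesToOrder 1 (pdx h) := hh.fderiv.clm_comp (.apply ℝ ℝ (1, 0))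
  have hhy : VanishesToOrder 1 (pdy h) := hh.fderiv.clm_comp (.apply ℝ ℝ (0, 1))
  let α := fderiv ℝ (pdx h) 0
  let β := fderiv ℝ (pdy h) 0
  refine ⟨α (1, 0) / 2, (α (0, 1) + β (1, 0)) / 2, β (0, 1) / 2, ?_⟩
  have hhx₂ : VanishesToOrder 2 (pdx h - ⇑α) := hhx.sub_fderiv
  have hhy₂ : VanishesToOrder 2 (pdy h - ⇑β) := hhy.sub_fderiv
  convert! (((hX.mul hhx₂).add (hY.mul hhy₂)).sub
    hh.fderiv_apply_self_sub_smul).const_smul 2⁻¹ using 1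
  funext p
  have hp := clm_prod_apply (fderiv ℝ h p) p
  have hα := clm_prod_apply α p
  have hβ := clm_prod_apply β p
  simp only [Pi.sub_apply, Pi.add_apply, Pi.mul_apply, Pi.smul_apply, smul_eq_mul, X, Y,
    ContinuousLinearMap.coe_fst', ContinuousLinearMap.coe_snd', pdx, pdy, dop, Nat.cast_ofNat]
  linear_combination hp / 2 + p.1 * hα / 2 + p.2 * hβ / 2

theorem HasTangentBranches.exists_sub_cubic (hg : HasTangentBranches h (0, 1)) :
    ∃ c A B C : ℝ, c ≠ 0 ∧ VanishesToOrder 4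
      (h - fun p => p.1 * (c * p.1 + (A * p.1 ^ 2 + B * (p.1 * p.2) + C * p.2 ^ 2))) := by
  let X := ContinuousLinearMap.fst ℝ ℝ ℝ
  have hX : VanishesToOrder 1 X := vanishesToOrder_one_clm X
  have linear_part {a : ℝ × ℝ → ℝ} (ha : IsBranchEquation a (0, 1)) :
      ∃ α : ℝ, α ≠ 0 ∧ VanishesToOrder 2 (a - α • ⇑X) := by
    have ha' : fderiv ℝ a 0 = fderiv ℝ a 0 (1, 0) • X := by
      ext <;> simp [X, ha.2]
    refine ⟨fderiv ℝ a 0 (1, 0), fun h₀ => ha.3 (by rw [ha', h₀, zero_smul]), ?_⟩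
    have taylor := ha.1.sub_fderiv
    rwa [ha'] at taylor
  obtain ⟨a, b, ha, hb, hab⟩ := hg
  obtain ⟨α, hα, haα⟩ := linear_part ha
  obtain ⟨β, hβ, hbβ⟩ := linear_part hb
  obtain ⟨A, B, C, hq⟩ := ((hbβ.const_smul α).add (haα.const_smul β)).exists_sub_quadratic
  refine ⟨α * β, A, B, C, mul_ne_zero hα hβ, ?_⟩
  convert! (hab.add (hX.mul hq)).add (haα.mul hbβ) using 1
  funext p
  simp only [Pi.sub_apply, Pi.add_apply, Pi.mul_apply, Pi.smul_apply, smul_eq_mul,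
    ContinuousLinearMap.coe_fst', X]
  ring

end PrenormalForm

section NormalForm

variable {h k : ℝ × ℝ → ℝ} {r : ℕ}

protected theorem JetEquiv.prenormalMap (hh : VanishesToOrder 1 h) (hk : VanishesToOrder 1 k)
    (hhk : VanishesToOrder (r + 1) (h - k)) : JetEquiv r (prenormalMap h) (prenormalMap k) :=
  .of_vanishesToOrder_sub (vanishesToOrder_prenormalMap hh) (vanishesToOrder_prenormalMap hk).1
    (vanishesToOrder_prenormalMap_sub hhk)

theorem jetEquiv_prenormalMap_sub_axis (hh : ContDiff ℝ ∞ h) (hh₀ : h 0 = 0) :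
    JetEquiv r (prenormalMap h) (prenormalMap fun p => h p - h (p.1, 0)) := by
  have hh₁ : VanishesToOrder 1 h := vanishesToOrder_one_iff.2 ⟨hh.contDiffAt, hh₀⟩
  let ψ : ℝ × ℝ → ℝ := fun q => q.2 - h (q.1, 0)
  have hψ : ContDiff ℝ ∞ ψ := contDiff_snd.sub (hh.comp (contDiff_fst.prodMk contDiff_const))
  have hψy : pdy ψ 0 ≠ 0 := by
    rw [pdy_eq_deriv (hψ.differentiable (by simp) _)]
    simp [ψ]
  have hk : ContDiff ℝ ∞ fun p => h p - h (p.1, 0) :=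
    hh.sub (hh.comp (contDiff_fst.prodMk contDiff_const))
  refine .of_comp (vanishesToOrder_prenormalMap hh₁) (contDiff_fst.prodMk hk).contDiffAt .id
    (isCoordinateChange_prenormalMap hψ (by simpa [ψ] using! hh₀) hψy) ?_
  convert! VanishesToOrder.zero
  exact sub_self _

theorem vanishesToOrder_monomial (a : ℝ) (i j : ℕ) :
    VanishesToOrder (i + j) (fun p : ℝ × ℝ => a * (p.1 ^ i * p.2 ^ j)) := by
  have hX := (vanishesToOrder_one_clm (.fst ℝ ℝ ℝ)).pow i
  have hY := (vanishesToOrder_one_clm (.snd ℝ ℝ ℝ)).pow j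
  exact (hX.mul hY).const_smul a

/-- The polynomials of degree at most `4` whose derivative along `y` has the form `x (c x + q)`
with a quadratic form `q`. -/
def tangentQuartic (c A B C : ℝ) (p : ℝ × ℝ) : ℝ :=
  c * (p.1 ^ 2 * p.2 ^ 1) +
    (A * (p.1 ^ 3 * p.2 ^ 1) + B * (p.1 ^ 2 * p.2 ^ 2) + C * (p.1 ^ 1 * p.2 ^ 3))

variable {c : ℝ} (A B C : ℝ)

theorem contDiff_tangentQuartic (c A B C : ℝ) : ContDiff ℝ ∞ (tangentQuartic c A B C) := by
  unfold tangentQuartic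
  fun_prop

theorem vanishesToOrder_tangentQuartic_zero :
    VanishesToOrder 4 (tangentQuartic 0 A B C) := by
  have quartic := ((vanishesToOrder_monomial A 3 1).add (vanishesToOrder_monomial B 2 2)).add
    (vanishesToOrder_monomial C 1 3)
  convert! quartic using 1
  funext p
  simp [tangentQuartic]

theorem vanishesToOrder_tangentQuartic (c A B C : ℝ) :
    VanishesToOrder 1 (tangentQuartic c A B C) :=
  vanishesToOrder_one_iff.2
    ⟨(contDiff_tangentQuartic c A B C).contDiffAt, by simp [tangentQuartic]⟩

theorem pdy_tangentQuartic (c A B C : ℝ) : pdy (tangentQuartic c A B C) =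
    fun p => p.1 * (c * p.1 + (A * p.1 ^ 2 + 2 * B * (p.1 * p.2) + 3 * C * p.2 ^ 2)) := by
  funext p
  rw [pdy_eq_deriv ((contDiff_tangentQuartic c A B C).differentiable (by simp) p)]
  have monomial (a : ℝ) (i j : ℕ) : HasDerivAt (fun y : ℝ => a * (p.1 ^ i * y ^ j))
      (a * (p.1 ^ i * (j * p.2 ^ (j - 1)))) p.2 :=
    ((hasDerivAt_pow j p.2).const_mul _).const_mul _
  refine ((monomial c 2 1).add (((monomial A 3 1).add (monomial B 2 2)).add
    (monomial C 1 3))).deriv.trans ?_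
  simp only [Nat.cast_one, Nat.cast_ofNat, tsub_self, Nat.add_one_sub_one, pow_zero, pow_one]
  ring

theorem hasNullTangentBranches_tangentQuartic (hc : c ≠ 0) :
    HasNullTangentBranches (prenormalMap (tangentQuartic c A B C)) (0, 1) := by
  have smooth := (contDiff_tangentQuartic c A B C).differentiable (by simp)
  let X := ContinuousLinearMap.fst ℝ ℝ ℝ
  have hX : IsBranchEquation X (0, 1) :=
    ⟨vanishesToOrder_one_clm X, by rw [X.fderiv]; rfl, by
      rw [X.fderiv, Ne, clm_prod_eq_zero_iff]; simp [X]⟩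
  let q : ℝ × ℝ → ℝ := fun p => A * p.1 ^ 2 + 2 * B * (p.1 * p.2) + 3 * C * p.2 ^ 2
  have hq : VanishesToOrder 2 q := by
    convert! ((vanishesToOrder_monomial A 2 0).add (vanishesToOrder_monomial (2 * B) 1 1)).add
      (vanishesToOrder_monomial (3 * C) 0 2) using 1
    funext p
    simp [q]
  have hcX : VanishesToOrder 1 (⇑(c • X)) := vanishesToOrder_one_clm (c • X)
  have slope : fderiv ℝ (⇑(c • X) + q) 0 = c • X := by
    rw [VanishesToOrder.fderiv_eq_of_sub (g := ⇑(c • X)) (by simpa using hq) hcX.1,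
      ContinuousLinearMap.fderiv]
  have hb : IsBranchEquation (⇑(c • X) + q) (0, 1) :=
    ⟨hcX.add (hq.mono one_le_two), by rw [slope]; exact mul_zero c, by
      rw [slope]; exact smul_ne_zero hc (X.fderiv (x := 0) ▸ hX.fderiv_ne_zero)⟩
  refine ⟨by simp, ?_, ?_⟩
  · rw [fderiv_prenormalMap_apply (smooth 0)]
    exact Prod.ext rfl (congrFun (pdy_tangentQuartic c A B C) 0 |>.trans (by simp))
  · rw [jacDet_prenormalMap smooth, pdy_tangentQuartic]
    refine ⟨X, ⇑(c • X) + q, hX, hb, ?_⟩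
    convert! VanishesToOrder.zero
    exact sub_self _

theorem exists_jetEquiv_prenormalMap_tangentQuartic (hh : ContDiff ℝ ∞ h) (hh₀ : h 0 = 0)
    (branches : HasTangentBranches (pdy h) (0, 1)) :
    ∃ c A B C, c ≠ 0 ∧ JetEquiv 4 (prenormalMap h) (prenormalMap (tangentQuartic c A B C)) := by
  obtain ⟨c, A, B, C, hc, cubic⟩ := branches.exists_sub_cubic
  refine ⟨c, A, B / 2, C / 3, hc, ?_⟩
  set P := tangentQuartic c A (B / 2) (C / 3)
  have hP : ContDiff ℝ ∞ P := contDiff_tangentQuartic _ _ _ _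
  let k : ℝ × ℝ → ℝ := fun p => h p - h (p.1, 0)
  have hk : ContDiff ℝ ∞ k := hh.sub (hh.comp (contDiff_fst.prodMk contDiff_const))
  have hk₁ : VanishesToOrder 1 k := vanishesToOrder_one_iff.2 ⟨hk.contDiffAt, sub_self _⟩
  have hkP : VanishesToOrder 5 (k - P) := by
    refine vanishesToOrder_succ_of_pdy (hk.sub hP) (fun x => by simp [k, P, tangentQuartic]) ?_
    convert! cubic using 1
    funext p
    have pdy_P := congrFun (pdy_tangentQuartic c A (B / 2) (C / 3)) p
    have pdy_k : pdy k p = pdy h p := by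
      rw [pdy_eq_deriv (hk.differentiable (by simp) p),
        pdy_eq_deriv (hh.differentiable (by simp) p)]
      exact deriv_sub_const (h (p.1, 0))
    have pdy_kP : pdy (k - P) p = pdy k p - pdy P p := by
      simp only [pdy, dop, fderiv_sub (hk.differentiable (by simp) p)
        (hP.differentiable (by simp) p), sub_apply]
    rw [pdy_kP, pdy_k, pdy_P, Pi.sub_apply]
    ring
  have hh₁ : VanishesToOrder 1 h := vanishesToOrder_one_iff.2 ⟨hh.contDiffAt, hh₀⟩
  have hP₁ : VanishesToOrder 1 P := vanishesToOrder_tangentQuartic _ _ _ _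
  exact (jetEquiv_prenormalMap_sub_axis hh hh₀).trans (vanishesToOrder_prenormalMap hh₁)
    (vanishesToOrder_prenormalMap hk₁) (vanishesToOrder_prenormalMap hP₁).1
    (.prenormalMap hk₁ hP₁ hkP)

theorem jetEquiv_tangentQuartic_shear (hc : c ≠ 0) :
    JetEquiv 4 (prenormalMap (tangentQuartic c A B C))
      (prenormalMap (tangentQuartic c 0 0 C)) := by
  let y : ℝ × ℝ → ℝ := fun p => p.2 - (A / c * (p.1 * p.2) + B / c * p.2 ^ 2)
  have hy : ContDiff ℝ ∞ y := by fun_prop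
  have hy_snd : VanishesToOrder 2 (y - ⇑(ContinuousLinearMap.snd ℝ ℝ ℝ)) := by
    convert! ((vanishesToOrder_monomial (A / c) 1 1).add
      (vanishesToOrder_monomial (B / c) 0 2)).neg using 1
    funext p
    simp [y]
  have hyy : pdy y 0 = 1 := by
    rw [pdy, dop, hy_snd.fderiv_eq_of_sub (vanishesToOrder_one_clm _).1, ContinuousLinearMap.fderiv]
    rfl
  have hφ := isCoordinateChange_prenormalMap hy (by simp [y]) (hyy ▸ one_ne_zero)
  have hφ_id : VanishesToOrder 2 (prenormalMap y - id) := vanishesToOrder_prenormalMap_sub hy_snd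
  have higher := (vanishesToOrder_tangentQuartic_zero A B C).comp_sub_comp hφ.vanishesToOrder
    IsCoordinateChange.id.vanishesToOrder hφ_id
  refine .of_comp (vanishesToOrder_prenormalMap (vanishesToOrder_tangentQuartic _ _ _ _))
    (vanishesToOrder_prenormalMap (vanishesToOrder_tangentQuartic _ _ _ _)).1 hφ .id ?_
  convert! vanishesToOrder_prenormalMap_sub higher using 1
  refine funext fun p => Prod.ext rfl ?_
  simp only [Pi.sub_apply, Function.comp_apply, id_eq, Prod.snd_sub, prenormalMap, tangentQuartic,
    y]
  field_simp
  ring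

theorem jetEquiv_tangentQuartic_scale {s t : ℝ} (hs : s ≠ 0) (ht : t ≠ 0) (c C : ℝ) :
    JetEquiv r (prenormalMap (tangentQuartic c 0 0 C))
      (prenormalMap (tangentQuartic (t * (c * s ^ 2)) 0 0 (t * (C * s)))) := by
  have scaling {s t : ℝ} (hs : s ≠ 0) (ht : t ≠ 0) :
      IsCoordinateChange fun p : ℝ × ℝ => (s * p.1, t * p.2) := by
    let L : (ℝ × ℝ) ≃L[ℝ] ℝ × ℝ :=
      .prodCongr (.smulLeft (Units.mk0 s hs)) (.smulLeft (Units.mk0 t ht))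
    exact .continuousLinearEquiv L
  refine .of_comp (vanishesToOrder_prenormalMap (vanishesToOrder_tangentQuartic _ _ _ _))
    (vanishesToOrder_prenormalMap (vanishesToOrder_tangentQuartic _ _ _ _)).1
    (scaling hs one_ne_zero) (scaling (inv_ne_zero hs) ht) (VanishesToOrder.zero.congr ?_)
  refine .of_forall fun p => Prod.ext ?_ ?_
  · simp [prenormalMap, hs]
  · simp only [Pi.sub_apply, Function.comp_apply, prenormalMap, tangentQuartic, Prod.mk_sub_mk,
      Pi.zero_apply, Prod.snd_zero]
    ring

theorem jetEquiv_tangentQuartic_model (hc : c ≠ 0) (C : ℝ) :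
    JetEquiv r (prenormalMap (tangentQuartic c 0 0 C)) (prenormalMap (tangentQuartic 1 0 0 1)) ∨
      JetEquiv r (prenormalMap (tangentQuartic c 0 0 C))
        (prenormalMap (tangentQuartic 1 0 0 0)) := by
  rcases eq_or_ne C 0 with rfl | hC
  · right
    have scaled := jetEquiv_tangentQuartic_scale (r := r) one_ne_zero (inv_ne_zero hc) c 0
    convert! scaled using 3
    · field_simp
    · ring
  · left
    have scaled := jetEquiv_tangentQuartic_scale (r := r) (div_ne_zero hC hc)
      (div_ne_zero hc (pow_ne_zero 2 hC)) c C
    convert! scaled using 3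
    all_goals
      field_simp

end NormalForm

section CorankOne

variable {f : ℝ × ℝ → ℝ × ℝ} {v w : ℝ × ℝ}

theorem CorankOne.fderiv_ne_zero (hf : CorankOne f) : fderiv ℝ f 0 ≠ 0 := by
  intro zero
  simp [CorankOne, zero] at hf

theorem CorankOne.finrank_ker (hf : CorankOne f) :
    Module.finrank ℝ (fderiv ℝ f 0).toLinearMap.ker = 1 := by
  have finrank_range : Module.finrank ℝ (fderiv ℝ f 0).toLinearMap.range = 1 :=
    Module.finrank_eq_of_rank_eq (hf.trans Nat.cast_one.symm)
  have rank_nullity := (fderiv ℝ f 0).toLinearMap.finrank_range_add_finrank_ker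
  simp only [Module.finrank_prod, Module.finrank_self] at rank_nullity
  omega

theorem CorankOne.exists_smul_eq (hf : CorankOne f) (hv : fderiv ℝ f 0 v = 0) (hv₀ : v ≠ 0)
    (hw : fderiv ℝ f 0 w = 0) : ∃ t : ℝ, t • v = w := by
  obtain ⟨t, ht⟩ := exists_smul_eq_of_finrank_eq_one hf.finrank_ker
    (x := ⟨v, hv⟩) (Subtype.coe_ne_coe.1 hv₀) ⟨w, hw⟩
  exact ⟨t, congrArg Subtype.val ht⟩

theorem CorankOne.jacDet_apply_zero (hf : CorankOne f) : jacDet f 0 = 0 := by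
  by_contra h
  have injective := LinearMap.ker_eq_bot.2 (jacDet_ne_zero_iff.1 h).1
  have finrank_ker := hf.finrank_ker
  rw [injective, finrank_bot] at finrank_ker
  exact zero_ne_one finrank_ker

theorem HasTangentBranches.jacDet_of_jetEquiv {c A B C : ℝ} (hf : ContDiff ℝ ∞ f) (hf₀ : f 0 = 0)
    (hcr : CorankOne f) (hv : fderiv ℝ f 0 v = 0) (hc : c ≠ 0)
    (h : JetEquiv 4 f (prenormalMap (tangentQuartic c A B C))) :
    HasTangentBranches (jacDet f) v := by
  have hf₁ : VanishesToOrder 1 f := vanishesToOrder_one_iff.2 ⟨hf.contDiffAt, hf₀⟩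
  have hg₁ := vanishesToOrder_prenormalMap (vanishesToOrder_tangentQuartic c A B C)
  obtain ⟨w, hw⟩ := (hasNullTangentBranches_tangentQuartic A B C hc).exists_of_jetEquiv hg₁ hf₁
    (h.symm hf₁ hg₁)
  obtain ⟨t, rfl⟩ := hcr.exists_smul_eq hw.fderiv_apply hw.ne_zero hv
  exact hw.branches.smul t

theorem exists_jetEquiv_tangentQuartic (hf : ContDiff ℝ ∞ f)
    (hf₀ : f 0 = 0) (hf' : fderiv ℝ f 0 ≠ 0) (hv : HasNullTangentBranches f v) :
    ∃ c C, c ≠ 0 ∧ JetEquiv 4 f (prenormalMap (tangentQuartic c 0 0 C)) := by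
  obtain ⟨h, hh, hh₀, hfh⟩ := exists_jetEquiv_prenormalMap hf hf₀ hf' 4
  have hf₁ : VanishesToOrder 1 f := vanishesToOrder_one_iff.2 ⟨hf.contDiffAt, hf₀⟩
  have hh₁ := vanishesToOrder_prenormalMap (vanishesToOrder_one_iff.2 ⟨hh.contDiffAt, hh₀⟩)
  have hh' := hh.differentiable (by simp)
  obtain ⟨w, hw⟩ := hv.exists_of_jetEquiv hf₁ hh₁ hfh
  have branches := (hw.prenormalMap_vertical hh').branches
  rw [jacDet_prenormalMap hh'] at branches
  obtain ⟨c, A, B, C, hc, hhq⟩ := exists_jetEquiv_prenormalMap_tangentQuartic hh hh₀ branches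
  have hq₁ (c A B C) := vanishesToOrder_prenormalMap (vanishesToOrder_tangentQuartic c A B C)
  have hfq := hfh.trans hf₁ hh₁ (hq₁ c A B C).1 hhq
  exact ⟨c, C, hc, hfq.trans hf₁ (hq₁ c A B C) (hq₁ c 0 0 C).1
    (jetEquiv_tangentQuartic_shear A B C hc)⟩

theorem jetEquiv_model_iff_hasTangentBranches (hf : ContDiff ℝ ∞ f) (hf₀ : f 0 = 0)
    (hcr : CorankOne f) (hv : fderiv ℝ f 0 v = 0) (hv₀ : v ≠ 0) :
    (JetEquiv 4 f (fun p => (p.1, p.1 ^ 2 * p.2 + p.1 * p.2 ^ 3)) ∨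
        JetEquiv 4 f (fun p => (p.1, p.1 ^ 2 * p.2))) ↔ HasTangentBranches (jacDet f) v := by
  have model₁ : (fun p : ℝ × ℝ => (p.1, p.1 ^ 2 * p.2 + p.1 * p.2 ^ 3)) =
      prenormalMap (tangentQuartic 1 0 0 1) := by
    funext p
    simp [prenormalMap, tangentQuartic]
  have model₀ : (fun p : ℝ × ℝ => (p.1, p.1 ^ 2 * p.2)) =
      prenormalMap (tangentQuartic 1 0 0 0) := by
    funext p
    simp [prenormalMap, tangentQuartic]
  rw [model₁, model₀]
  constructor
  · rintro (h | h) <;> exact .jacDet_of_jetEquiv hf hf₀ hcr hv one_ne_zero h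
  · intro branches
    have hfv : HasNullTangentBranches f v := ⟨hv₀, hv, branches⟩
    obtain ⟨c, C, hc, hfq⟩ := exists_jetEquiv_tangentQuartic hf hf₀ hcr.fderiv_ne_zero hfv
    have hf₁ : VanishesToOrder 1 f := vanishesToOrder_one_iff.2 ⟨hf.contDiffAt, hf₀⟩
    have hq₁ (c C) := vanishesToOrder_prenormalMap (vanishesToOrder_tangentQuartic c 0 0 C)
    exact (jetEquiv_tangentQuartic_model hc C).imp (hfq.trans hf₁ (hq₁ _ _) (hq₁ _ _).1)
      (hfq.trans hf₁ (hq₁ _ _) (hq₁ _ _).1)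

end CorankOne

theorem stmt18_general {f η : ℝ × ℝ → ℝ × ℝ} (hf : ContDiff ℝ ∞ f) (hf₀ : f 0 = 0)
    (hcr : CorankOne f) (hη : ContDiffAt ℝ ∞ η 0) (hη₀ : η 0 ≠ 0) (hker : fderiv ℝ f 0 (η 0) = 0) :
    (JetEquiv 4 f (fun p => (p.1, p.1 ^ 2 * p.2 + p.1 * p.2 ^ 3)) ∨
        JetEquiv 4 f (fun p => (p.1, p.1 ^ 2 * p.2))) ↔
      (fderiv ℝ (jacDet f) 0 = 0 ∧ (hess (jacDet f)).rank = 1 ∧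
        etaIter η 2 (jacDet f) 0 = 0 ∧ etaIter η 3 (jacDet f) 0 = 0) := by
  have hjac : VanishesToOrder 1 (jacDet f) :=
    vanishesToOrder_one_iff.2 ⟨contDiffAt_jacDet hf.contDiffAt, hcr.jacDet_apply_zero⟩
  exact (jetEquiv_model_iff_hasTangentBranches hf hf₀ hcr hker hη₀).trans
    (hasTangentBranches_iff hη hη₀ hjac)

theorem stmt18 (f η : ℝ × ℝ → ℝ × ℝ)
    (hf : ContDiff ℝ (⊤ : ℕ∞) f) (hf0 : f 0 = 0) (hcr : CorankOne f)
    (hη : IsNullVF f η) :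
    (JetEquiv 4 f (fun p => (p.1, p.1 ^ 2 * p.2 + p.1 * p.2 ^ 3)) ∨
        JetEquiv 4 f (fun p => (p.1, p.1 ^ 2 * p.2))) ↔
      (fderiv ℝ (jacDet f) 0 = 0 ∧ (hess (jacDet f)).rank = 1 ∧
        etaIter η 2 (jacDet f) 0 = 0 ∧ etaIter η 3 (jacDet f) 0 = 0) := by
  obtain ⟨hη₀, U, hU, hη_smooth, hη_null⟩ := hη
  have hker : fderiv ℝ f 0 (η 0) = 0 := hη_null 0 (mem_of_mem_nhds hU) hcr.jacDet_apply_zero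
  exact stmt18_general hf hf0 hcr (hη_smooth.contDiffAt hU) hη₀ hker
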